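/- For every positive integer n, the symmetric group S_n possesses a 2-basic set B that contains every self-associated irreducible character, i.e., every irreducible complex character χ of S_n satisfying ε⊗χ = χ, where ε denotes the sign character of S_n. -/

import Mathlib

open scoped Classical

/-- `f : G → ℂ` is an irreducible complex character of `G`. -/
def IsIrrChar (G : Type) [Group G] (f : G → ℂ) : Prop :=
  ∃ V : FDRep ℂ G, CategoryTheory.Simple V ∧ FDRep.character V = f

/-- Restriction of a function to 2-regular (odd order) elements, extended by zero. -/
noncomputable def twoReg {G : Type*} [Monoid G] (f : G → ℂ) : G → ℂ :=
  fun g => if Odd (orderOf g) then f g else 0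

/-- `B` is a 2-basic set of `G`: the restrictions to 2-regular elements of the members of `B`
are `ℤ`-linearly independent and span the same `ℤ`-module as the restrictions to 2-regular
elements of all irreducible characters. -/
def IsTwoBasicSet (G : Type) [Group G] (B : Set (G → ℂ)) : Prop :=
  B ⊆ {f | IsIrrChar G f} ∧
  LinearIndependent ℤ (fun f : B => twoReg (f : G → ℂ)) ∧
  Submodule.span ℤ (twoReg '' B) = Submodule.span ℤ (twoReg '' {f | IsIrrChar G f})

/-!
With `N = n` variables, the irreducible characters of `Sₙ` are, up to sign, the functions
`π ↦ [x^b] (a_δ p_π)`, where `b` enumerates a set `A` of `N` natural numbers (a beta set).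
If all entries of `d` are even or equal to `2N - 1`, the class function
`ψ_d : π ↦ [x^d] (a_{2δ} a_δ p_π)` vanishes off the 2-regular elements, because multiplication by
`p_{2k}` commutes with the dilation `xᵢ ↦ xᵢ²`. Hence pairing with `ψ_d` only sees restrictions to
2-regular elements, and it takes the character of `A` to `± [x^d] (a_{2δ} a_b)`.

Among the rearrangements of `b` whose sum `d` with `2δ` has this property exactly one, the folding
of `A`, makes `d` longest. Let the label of `A` be the set of even entries of that `d`. Characters
with distinct labels restrict to a unitriangular system, and they form a 2-basic set as soon as
there are as many of them as there are partitions of `n` into odd parts. Beta sets of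
self-associated characters, being invariant under the conjugation `A ↦ {p < 2N | 2N - 1 - p ∉ A}`,
are determined by their labels, so they can be completed to a system of representatives.

There are enough labels: beta sets whose even elements are an initial segment of the even numbers
are also determined by their labels. Let `low n` and `odd n` be the numbers of such beta sets and of
partitions of `n` into odd parts. Sliding even elements down gives
`p(n) ≤ ∑ₖ p(k) low (n - 2k)`, and `low ≤ odd` by linear independence, whereas separating even
and odd parts gives `∑ₖ p(k) odd (n - 2k) ≤ p(n)`; so `low n = odd n`.
-/

/-! ## Characters of finite groups -/

section Characters

variable {G : Type} [Group G]

/-- The bilinear form `|G|⁻¹ ∑ f(x) g(x⁻¹)`, which on characters is the usual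
Hermitian product. -/
noncomputable def charInner [Fintype G] : LinearMap.BilinForm ℂ (G → ℂ) :=
  LinearMap.mk₂ ℂ (fun f g => (Nat.card G : ℂ)⁻¹ * ∑ x, f x * g x⁻¹)
    (fun f₁ f₂ g => by simp [add_mul, Finset.sum_add_distrib, mul_add])
    (fun c f g => by simp [mul_assoc, ← Finset.mul_sum, mul_left_comm])
    (fun f g₁ g₂ => by simp [Finset.sum_add_distrib, mul_add])
    (fun c f g => by simp [← Finset.mul_sum, mul_left_comm])

lemma charInner_apply [Fintype G] (f g : G → ℂ) :
    charInner f g = (Nat.card G : ℂ)⁻¹ * ∑ x, f x * g x⁻¹ := rfl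

variable (G) in
/-- The virtual characters, i.e. the `ℤ`-combinations of irreducible characters. -/
def virtualChars : Submodule ℤ (G → ℂ) := Submodule.span ℤ {f | IsIrrChar G f}

lemma IsIrrChar.charInner_eq [Fintype G] {f g : G → ℂ} (hf : IsIrrChar G f)
    (hg : IsIrrChar G g) : charInner f g = if f = g then 1 else 0 := by
  obtain ⟨V, hV, rfl⟩ := hf
  obtain ⟨W, hW, rfl⟩ := hg
  have : Invertible (Nat.card G : ℂ) := invertibleOfNonzero (by simp)
  have hVW := FDRep.char_orthonormal V W
  have hVV := FDRep.char_orthonormal V V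
  rw [if_pos ⟨CategoryTheory.Iso.refl V⟩] at hVV
  rw [charInner_apply]
  split_ifs with h
  · simpa [← h] using hVV
  · rw [if_neg fun ⟨i⟩ => h (FDRep.char_iso i)] at hVW
    simpa using hVW

section

variable {V : Type} [AddCommGroup V] [Module ℂ V]

lemma exists_subrepresentation_ne [Nontrivial V] {ρ : Representation ℂ G V}
    (hρ : ¬ ρ.IsIrreducible) : ∃ S : Subrepresentation ρ, S ≠ ⊥ ∧ S ≠ ⊤ := by
  by_contra! hS
  have : Nontrivial (Subrepresentation ρ) := ⟨⊥, ⊤, fun h =>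
    bot_ne_top (congrArg Subrepresentation.toSubmodule h)⟩
  exact hρ ⟨fun S => or_iff_not_imp_left.2 (hS S)⟩

variable [FiniteDimensional ℂ V]

lemma isIrrChar_character [Finite G] {ρ : Representation ℂ G V} (hρ : ρ.IsIrreducible) :
    IsIrrChar G ρ.character := by
  have := Fintype.ofFinite G
  have : Invertible (Nat.card G : ℂ) := invertibleOfNonzero (by simp)
  refine ⟨FDRep.of ρ, ?_, rfl⟩
  rw [FDRep.simple_iff_char_is_norm_one]
  have h := Representation.char_orthonormal ρ ρ
  rw [if_pos ⟨Representation.Equiv.refl ρ⟩] at h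
  have hG : (Nat.card G : ℂ) ≠ 0 := by simp
  field_simp at h
  exact h

lemma character_eq_add_of_isCompl {ρ : Representation ℂ G V} {S T : Subrepresentation ρ}
    (h : IsCompl S T) :
    ρ.character = S.toRepresentation.character + T.toRepresentation.character := by
  have hc : IsCompl S.toSubmodule T.toSubmodule :=
    ⟨disjoint_iff.2 (congrArg Subrepresentation.toSubmodule h.1.eq_bot),
      codisjoint_iff.2 (congrArg Subrepresentation.toSubmodule h.2.eq_top)⟩
  have hint := (DirectSum.isInternal_submodule_iff_isCompl
    (fun b : Bool => bif b then S.toSubmodule else T.toSubmodule) (i := true) (j := false)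
    (by simp) (by ext x; cases x <;> simp)).2 hc
  ext g
  have htr := LinearMap.trace_eq_sum_trace_restrict hint (f := ρ g) fun
    | true => S.apply_mem_toSubmodule g
    | false => T.apply_mem_toSubmodule g
  rwa [Fintype.sum_bool] at htr

lemma finrank_toSubmodule_lt {ρ : Representation ℂ G V} {S : Subrepresentation ρ} (hS : S ≠ ⊤) :
    Module.finrank ℂ S.toSubmodule < Module.finrank ℂ V :=
  Submodule.finrank_lt fun h => hS (Subrepresentation.toSubmodule_injective h)

lemma character_mem_virtualChars [Finite G] (ρ : Representation ℂ G V) :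
    ρ.character ∈ virtualChars G := by
  induction hd : Module.finrank ℂ V using Nat.strong_induction_on generalizing V with
  | _ d ih =>
  subst hd
  by_cases hirr : ρ.IsIrreducible
  · exact Submodule.subset_span (isIrrChar_character hirr)
  rcases subsingleton_or_nontrivial V with hV | hV
  · have h0 : ρ.character = 0 := funext fun g => by
      rw [Representation.character, Subsingleton.elim (ρ g) 0, map_zero, Pi.zero_apply]
    exact h0 ▸ zero_mem _
  obtain ⟨S, hbot, htop⟩ := exists_subrepresentation_ne hirr
  have : NeZero (Nat.card G : ℂ) := ⟨Nat.cast_ne_zero.2 Nat.card_pos.ne'⟩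
  obtain ⟨T, hST⟩ := exists_isCompl S
  have hT : T ≠ ⊤ := by
    rintro rfl
    exact hbot (by simpa using hST.1.eq_bot)
  rw [character_eq_add_of_isCompl hST]
  exact add_mem (ih _ (finrank_toSubmodule_lt htop) _ rfl) (ih _ (finrank_toSubmodule_lt hT) _ rfl)

end

/-- The representation on functions attached to an action by permutations. -/
noncomputable def permRepresentation {X : Type} (φ : G →* Equiv.Perm X) :
    Representation ℂ G (X → ℂ) where
  toFun g := LinearMap.funLeft ℂ ℂ (φ g⁻¹)
  map_one' := by ext; simp
  map_mul' a b := LinearMap.ext fun f => funext fun x => by simp [LinearMap.funLeft_apply]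

lemma character_permRepresentation {X : Type} [Finite X] (φ : G →* Equiv.Perm X) (g : G) :
    (permRepresentation φ).character g = Nat.card {x // φ g x = x} := by
  have := Fintype.ofFinite X
  rw [Representation.character, LinearMap.trace_eq_matrix_trace ℂ (Pi.basisFun ℂ X)]
  have hinv (x : X) : (φ g).symm x = x ↔ φ g x = x := by rw [Equiv.symm_apply_eq, eq_comm]
  simp [Matrix.trace, permRepresentation, LinearMap.funLeft_apply, Pi.single_apply,
    Fintype.card_subtype, hinv]

lemma exists_eq_single_of_sum_sq_eq_one {ι : Type*} {c : ι →₀ ℤ}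
    (h : ∑ i ∈ c.support, c i ^ 2 = 1) : ∃ i, ∃ s : ℤˣ, c = Finsupp.single i (s : ℤ) := by
  have hpos : ∀ i ∈ c.support, 1 ≤ c i ^ 2 := fun i hi =>
    Int.add_one_le_iff.2 (sq_pos_of_ne_zero (Finsupp.mem_support_iff.1 hi))
  have hle : (c.support.card : ℤ) ≤ 1 := by
    rw [← h]
    simpa using Finset.card_nsmul_le_sum c.support (fun i => c i ^ 2) 1 hpos
  have hne : c.support.card ≠ 0 := fun h0 => by
    simp [Finset.card_eq_zero.1 h0] at h
  obtain ⟨i, hi⟩ := Finset.card_eq_one.1 (by omega : c.support.card = 1)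
  rw [hi, Finset.sum_singleton] at h
  refine ⟨i, Units.ofPowEqOne _ 2 h two_ne_zero, ?_⟩
  rw [Units.val_ofPowEqOne]
  exact Finsupp.eq_single_iff.2 ⟨hi.subset, rfl⟩

lemma charInner_sum_irrChar_self [Fintype G] (c : {f : G → ℂ // IsIrrChar G f} →₀ ℤ) :
    charInner (c.sum fun i a => a • (i : G → ℂ)) (c.sum fun i a => a • (i : G → ℂ)) =
      ((∑ i ∈ c.support, c i ^ 2 : ℤ) : ℂ) := by
  have horth (i j : {f : G → ℂ // IsIrrChar G f}) :
      charInner (i : G → ℂ) j = if i = j then 1 else 0 := by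
    simp [i.2.charInner_eq j.2, Subtype.coe_inj]
  simp only [Finsupp.sum, map_sum, LinearMap.sum_apply, map_zsmul, LinearMap.smul_apply, horth]
  simp +contextual [sq]

lemma exists_isIrrChar_of_charInner_self [Fintype G] {χ : G → ℂ} (hχ : χ ∈ virtualChars G)
    (h1 : charInner χ χ = 1) : ∃ s : ℤˣ, IsIrrChar G (s • χ) := by
  rw [virtualChars, ← Subtype.range_coe_subtype (p := fun f => IsIrrChar G f),
    Finsupp.mem_span_range_iff_exists_finsupp] at hχ
  obtain ⟨c, rfl⟩ := hχ
  rw [charInner_sum_irrChar_self] at h1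
  obtain ⟨i, s, rfl⟩ := exists_eq_single_of_sum_sq_eq_one (by exact_mod_cast h1)
  refine ⟨s, ?_⟩
  rw [Finsupp.sum_single_index (by exact zero_smul ℤ _), Units.smul_def, smul_smul, ← Units.val_mul,
    Int.units_mul_self, Units.val_one, one_smul]
  exact i.2

end Characters

/-! ## Words fixed by a permutation -/

section PermOrbits

variable {α : Type*} [Fintype α] [DecidableEq α] (π : Equiv.Perm α)

/-- The cycles of a permutation, fixed points included. -/
abbrev PermOrbit : Type _ := Quotient (Equiv.Perm.SameCycle.setoid π)

noncomputable instance : Fintype (PermOrbit π) := Fintype.ofFinite _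

/-- The number of elements of a cycle. -/
noncomputable def permOrbitCard (q : PermOrbit π) : ℕ :=
  (Finset.univ.filter fun a : α => (⟦a⟧ : PermOrbit π) = q).card

/-- The cycle as a permutation, which is trivial for a fixed point. -/
def permOrbitCycle : PermOrbit π → Equiv.Perm α :=
  Quotient.lift π.cycleOf fun _ _ h => h.cycleOf_eq

variable {π}

omit [Fintype α] [DecidableEq α] in
lemma permOrbit_mk_eq_mk_iff {a b : α} : (⟦a⟧ : PermOrbit π) = ⟦b⟧ ↔ π.SameCycle a b :=
  Quotient.eq

lemma permOrbitCycle_eq_one_iff {a : α} : permOrbitCycle π ⟦a⟧ = 1 ↔ π a = a :=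
  π.cycleOf_eq_one_iff

lemma permOrbitCycle_ne_one_iff {a : α} : permOrbitCycle π ⟦a⟧ ≠ 1 ↔ a ∈ π.support :=
  (not_congr permOrbitCycle_eq_one_iff).trans Equiv.Perm.mem_support.symm

lemma permOrbitCard_of_ne_one {q : PermOrbit π} (hq : permOrbitCycle π q ≠ 1) :
    permOrbitCard π q = (permOrbitCycle π q).support.card := by
  induction q using Quotient.inductionOn with | _ a
  rw [permOrbitCard]
  congr 1
  ext b
  have ha : a ∈ π.support := permOrbitCycle_ne_one_iff.1 hq
  rw [permOrbitCycle, Quotient.lift_mk, Equiv.Perm.mem_support_cycleOf_iff,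
    Finset.mem_filter_univ, permOrbit_mk_eq_mk_iff, Equiv.Perm.sameCycle_comm]
  exact (and_iff_left ha).symm

omit [DecidableEq α] in
lemma permOrbitCard_mk_of_apply_eq {a : α} (ha : π a = a) : permOrbitCard π ⟦a⟧ = 1 := by
  rw [permOrbitCard, Finset.card_eq_one]
  refine ⟨a, ?_⟩
  ext b
  simp only [Finset.mem_filter_univ, permOrbit_mk_eq_mk_iff, Finset.mem_singleton]
  exact ⟨fun h => h.eq_of_right ha, fun h => h ▸ .refl _ _⟩

lemma bijOn_permOrbitCycle :
    Set.BijOn (permOrbitCycle π) {q | permOrbitCycle π q ≠ 1} π.cycleFactorsFinset := by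
  refine ⟨fun q hq => ?_, fun q hq q' _ h => ?_, fun c hc => ?_⟩
  · induction q using Quotient.inductionOn with | _ a
    exact Equiv.Perm.cycleOf_mem_cycleFactorsFinset_iff.2 (permOrbitCycle_ne_one_iff.1 hq)
  · induction q using Quotient.inductionOn with | _ a
    induction q' using Quotient.inductionOn with | _ b
    exact permOrbit_mk_eq_mk_iff.2
      ((Equiv.Perm.sameCycle_iff_cycleOf_eq_of_mem_support (permOrbitCycle_ne_one_iff.1 hq)
        (permOrbitCycle_ne_one_iff.1 (h ▸ hq))).2 h)
  · have hcycle := (Equiv.Perm.mem_cycleFactorsFinset_iff.1 hc).1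
    obtain ⟨a, ha⟩ := hcycle.nonempty_support
    have hac : permOrbitCycle π ⟦a⟧ = c := (Equiv.Perm.cycle_is_cycleOf ha hc).symm
    exact ⟨⟦a⟧, by simpa [hac] using hcycle.ne_one, hac⟩

lemma card_filter_permOrbitCycle_eq_one :
    (Finset.univ.filter fun q => permOrbitCycle π q = 1).card =
      Fintype.card α - π.support.card := by
  rw [← Finset.card_compl]
  symm
  refine Finset.card_nbij (fun a => ⟦a⟧) (fun a ha => ?_) (fun a ha b _ h => ?_) fun q hq => ?_
  · simpa [permOrbitCycle_eq_one_iff] using ha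
  · exact (permOrbit_mk_eq_mk_iff.1 h).eq_of_left (by simpa [Function.IsFixedPt] using ha)
  · induction q using Quotient.inductionOn with | _ a
    exact ⟨a, by simpa [permOrbitCycle_eq_one_iff] using hq, rfl⟩

variable (π)

lemma prod_permOrbitCard {M : Type*} [CommMonoid M] (F : ℕ → M) :
    ∏ q : PermOrbit π, F (permOrbitCard π q) = (π.partition.parts.map F).prod := by
  rw [Equiv.Perm.parts_partition, Multiset.map_add, Multiset.prod_add, Multiset.map_replicate,
    Multiset.prod_replicate, Equiv.Perm.cycleType_def, Multiset.map_map,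
    ← Finset.prod_filter_not_mul_prod_filter Finset.univ (fun q => permOrbitCycle π q = 1),
    ← card_filter_permOrbitCycle_eq_one]
  congr 1
  · obtain ⟨hmaps, hinj, hsurj⟩ := bijOn_permOrbitCycle (π := π)
    refine Finset.prod_nbij (permOrbitCycle π) (fun q hq => hmaps (by simpa using hq))
      (by simpa [Set.InjOn] using hinj) (by simpa [Set.SurjOn] using hsurj) fun q hq => ?_
    rw [permOrbitCard_of_ne_one (by simpa using hq)]
    rfl
  · refine Finset.prod_eq_pow_card fun q hq => ?_
    induction q using Quotient.inductionOn with | _ a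
    rw [permOrbitCard_mk_of_apply_eq (by simpa [permOrbitCycle_eq_one_iff] using hq)]

end PermOrbits

section FixedWords

variable {α ι : Type*} [Fintype α] [DecidableEq α]

/-- The words in the alphabet `ι` with positions in `α` which are constant on the cycles
of `π`. -/
noncomputable def fixedWords (ι : Type*) [Fintype ι] (π : Equiv.Perm α) : Finset (α → ι) :=
  Finset.univ.filter fun f => f ∘ π = f

omit [Fintype α] [DecidableEq α] in
lemma apply_eq_of_sameCycle {π : Equiv.Perm α} {f : α → ι} (hf : f ∘ π = f) {a b : α}
    (h : π.SameCycle a b) : f a = f b := by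
  obtain ⟨m, rfl⟩ := h
  induction m with
  | zero => rfl
  | succ m ih => rw [add_comm, zpow_add, zpow_one, Equiv.Perm.mul_apply, ih, ← congrFun hf]; rfl
  | pred m ih =>
    rw [ih, ← congrFun hf ((π ^ (-(m : ℤ) - 1)) a), Function.comp_apply, ← Equiv.Perm.mul_apply,
      ← zpow_one_add, add_sub_cancel]

variable [Fintype ι]

lemma sum_fixedWords (π : Equiv.Perm α) {R : Type*} [CommSemiring R] (F : (α → ι) → R) :
    ∑ f ∈ fixedWords ι π, F f = ∑ g : PermOrbit π → ι, F fun a => g ⟦a⟧ := by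
  symm
  refine Finset.sum_bij (fun g _ a => g ⟦a⟧) (fun g _ => ?_) (fun g _ g' _ h => ?_)
    (fun f hf => ?_) fun _ _ => rfl
  · have hπ (a : α) : (⟦π a⟧ : PermOrbit π) = ⟦a⟧ :=
      permOrbit_mk_eq_mk_iff.2 (Equiv.Perm.sameCycle_apply_left.2 (.refl _ _))
    simp [fixedWords, funext_iff, hπ]
  · ext q
    induction q using Quotient.inductionOn with | _ a
    exact congrFun h a
  · exact ⟨Quotient.lift f fun a b h => apply_eq_of_sameCycle (by simpa [fixedWords] using hf) h,
      Finset.mem_univ _, rfl⟩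

lemma prod_map_sum_pow_eq_sum_fixedWords (π : Equiv.Perm α) {R : Type*} [CommSemiring R]
    (z : ι → R) :
    (π.partition.parts.map fun k => ∑ i, z i ^ k).prod =
      ∑ f ∈ fixedWords ι π, ∏ a, z (f a) := by
  rw [← prod_permOrbitCard, Finset.prod_univ_sum, Fintype.piFinset_univ, sum_fixedWords]
  refine Finset.sum_congr rfl fun g _ => ?_
  rw [← Finset.prod_fiberwise Finset.univ fun a => (⟦a⟧ : PermOrbit π)]
  refine Finset.prod_congr rfl fun q _ => (Finset.prod_eq_pow_card fun a ha => ?_).symm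
  rw [← (Finset.mem_filter.1 ha).2]

end FixedWords

section Content

variable {α ι : Type} [Fintype α]

/-- The number of occurrences of each letter in a word. -/
noncomputable def content (f : α → ι) (t : ι) : ℕ :=
  (Finset.univ.filter fun a => f a = t).card

lemma content_comp_perm (f : α → ι) (π : Equiv.Perm α) : content (f ∘ π) = content f := by
  ext t
  exact Finset.card_equiv π (by simp)

lemma exists_comp_inv_eq_of_content_eq {f g : α → ι} (h : content f = content g) :
    ∃ π : Equiv.Perm α, f ∘ ⇑π⁻¹ = g := by
  have e (t : ι) : Nonempty ({a // f a = t} ≃ {a // g a = t}) := by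
    rw [← Fintype.card_eq, Fintype.card_subtype, Fintype.card_subtype]
    exact congrFun h t
  let E := Equiv.ofFiberEquiv fun t => (e t).some
  refine ⟨E, ?_⟩
  ext a
  obtain ⟨b, rfl⟩ := E.surjective a
  have hE : g (E b) = f b := Equiv.ofFiberEquiv_map _ b
  simp [hE]

lemma prod_comp_eq_prod_pow_content [Fintype ι] {R : Type*} [CommMonoid R] (z : ι → R)
    (f : α → ι) : ∏ a, z (f a) = ∏ t, z t ^ content f t := by
  rw [← Finset.prod_fiberwise Finset.univ f]
  refine Finset.prod_congr rfl fun t _ => Finset.prod_eq_pow_card fun a ha => ?_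
  rw [(Finset.mem_filter.1 ha).2]

lemma sum_content [Fintype ι] (f : α → ι) : ∑ t, content f t = Fintype.card α :=
  (Finset.card_eq_sum_card_fiberwise (fun _ _ => Finset.mem_univ _)).symm

lemma exists_content_eq [Fintype ι] {M : ι → ℕ} (hM : ∑ t, M t = Fintype.card α) :
    ∃ f : α → ι, content f = M := by
  have e : Nonempty (α ≃ Σ t, Fin (M t)) := by
    rw [← Fintype.card_eq]
    simp [hM]
  refine ⟨fun a => (e.some a).1, ?_⟩
  ext t
  rw [content, ← Fintype.card_subtype]
  have e' : {a // (e.some a).1 = t} ≃ Fin (M t) :=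
    (Equiv.subtypeEquiv e.some fun _ => Iff.rfl).trans (Equiv.sigmaSubtype t)
  simpa using Fintype.card_congr e'

/-- The action of permutations of the positions on the words of content `M`. -/
def wordPerm (M : ι → ℕ) : Equiv.Perm α →* Equiv.Perm {f : α → ι // content f = M} where
  toFun π :=
    { toFun := fun f => ⟨f.1 ∘ ⇑π⁻¹, by rw [content_comp_perm, f.2]⟩
      invFun := fun f => ⟨f.1 ∘ π, by rw [content_comp_perm, f.2]⟩
      left_inv := fun f => by ext; simp
      right_inv := fun f => by ext; simp }
  map_one' := by ext; simp
  map_mul' a b := by ext; simp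

variable [DecidableEq α] [Fintype ι]

lemma mem_fixedWords_iff_comp_inv {π : Equiv.Perm α} {f : α → ι} :
    f ∈ fixedWords ι π ↔ f ∘ ⇑π⁻¹ = f := by
  rw [fixedWords, Finset.mem_filter_univ, ← π.eq_comp_symm, eq_comm]
  rfl

lemma fixedWords_inv (π : Equiv.Perm α) : fixedWords ι π⁻¹ = fixedWords ι π := by
  ext f
  rw [mem_fixedWords_iff_comp_inv, inv_inv, fixedWords, Finset.mem_filter_univ]

lemma card_filter_fixedWords (π : Equiv.Perm α) (M : ι → ℕ) :
    ((fixedWords ι π).filter fun f => content f = M).card =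
      Nat.card {x // wordPerm M π x = x} := by
  rw [Nat.card_eq_fintype_card, Fintype.card_subtype]
  symm
  refine Finset.card_nbij Subtype.val (fun f hf => ?_) Subtype.val_injective.injOn fun f hf => ?_
  · have hf' := congrArg Subtype.val (Finset.mem_filter.1 hf).2
    exact Finset.mem_filter.2 ⟨mem_fixedWords_iff_comp_inv.2 hf', f.2⟩
  · obtain ⟨hfix, hM⟩ := Finset.mem_filter.1 hf
    exact ⟨⟨f, hM⟩, by simpa using Subtype.ext (mem_fixedWords_iff_comp_inv.1 hfix), rfl⟩

lemma card_filter_fixedWords_mem_virtualChars (M : ι → ℕ) :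
    (fun π : Equiv.Perm α => (((fixedWords ι π).filter fun f => content f = M).card : ℂ)) ∈
      virtualChars (Equiv.Perm α) := by
  simp_rw [card_filter_fixedWords, ← character_permRepresentation]
  exact character_mem_virtualChars _

end Content

lemma sum_card_fixed_of_forall_exists_eq {G X : Type*} [Group G] [Fintype G] [Finite X]
    [Nonempty X] (φ : G →* Equiv.Perm X) (hφ : ∀ x y, ∃ g, φ g x = y) :
    ∑ g : G, Nat.card {x // φ g x = x} = Fintype.card G := by
  have := Fintype.ofFinite X
  let _ : MulAction G X := MulAction.compHom X φ
  have : MulAction.IsPretransitive G X := ⟨hφ⟩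
  have hsub := (MulAction.pretransitive_iff_subsingleton_quotient G X).1 this
  have hne : Nonempty (MulAction.orbitRel.Quotient G X) := ⟨⟦Classical.arbitrary X⟧⟩
  have hcard : Fintype.card (MulAction.orbitRel.Quotient G X) = 1 :=
    Fintype.card_eq_one_iff_nonempty_unique.2 ⟨⟨⟨hne.some⟩, fun a => hsub.elim _ _⟩⟩
  have h := MulAction.sum_card_fixedBy_eq_card_orbits_mul_card_group G X
  rw [hcard, one_mul] at h
  simp_rw [← h, Nat.card_eq_fintype_card]
  rfl

section Burnside

variable {α ι : Type} [Fintype α] [DecidableEq α] [Fintype ι]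

lemma sum_card_filter_fixedWords {M : ι → ℕ} (hM : ∑ t, M t = Fintype.card α) :
    ∑ π : Equiv.Perm α, ((fixedWords ι π).filter fun f => content f = M).card =
      (Fintype.card α).factorial := by
  obtain ⟨f, hf⟩ := exists_content_eq hM
  have : Nonempty {f : α → ι // content f = M} := ⟨⟨f, hf⟩⟩
  simp_rw [card_filter_fixedWords]
  rw [sum_card_fixed_of_forall_exists_eq, Fintype.card_perm]
  intro x y
  obtain ⟨π, hπ⟩ := exists_comp_inv_eq_of_content_eq (x.2.trans y.2.symm)
  exact ⟨π, Subtype.ext hπ⟩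

lemma sum_perm_sum_fixedWords [DecidableEq ι] {A : Type*} [AddCommMonoid A] (F : (ι → ℕ) → A) :
    ∑ π : Equiv.Perm α, ∑ f ∈ fixedWords ι π, F (content f) =
      (Fintype.card α).factorial •
        ∑ M ∈ Finset.piAntidiag Finset.univ (Fintype.card α), F M := by
  have hπ (π : Equiv.Perm α) : ∑ f ∈ fixedWords ι π, F (content f) =
      ∑ M ∈ Finset.piAntidiag Finset.univ (Fintype.card α),
        ((fixedWords ι π).filter fun f => content f = M).card • F M := by
    rw [← Finset.sum_fiberwise_of_maps_to (g := content) (fun f _ =>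
      Finset.mem_piAntidiag.2 ⟨sum_content f, by simp⟩)]
    refine Finset.sum_congr rfl fun M _ => Finset.sum_eq_card_nsmul fun f hf => ?_
    rw [(Finset.mem_filter.1 hf).2]
  simp_rw [hπ]
  rw [Finset.sum_comm, Finset.smul_sum]
  refine Finset.sum_congr rfl fun M hM => ?_
  rw [← Finset.sum_smul, sum_card_filter_fixedWords (by simpa using hM)]

end Burnside

/-! ## The Cauchy and Jacobi–Trudi identities -/

section CompleteSeries

open Polynomial

variable {ι R : Type*} [Fintype ι] [CommRing R]

/-- The generating function `∏ᵢ (1 - yᵢ X)⁻¹` of the complete homogeneous symmetric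
polynomials. -/
noncomputable def completeSeries (y : ι → R) : PowerSeries R := ∏ i, PowerSeries.mk (y i ^ ·)

lemma coeff_completeSeries (y : ι → R) (m : ℕ) :
    (completeSeries y).coeff m =
      ∑ M ∈ Finset.piAntidiag Finset.univ m, ∏ i, y i ^ M i := by
  rw [completeSeries, PowerSeries.coeff_prod]
  exact Finset.sum_nbij' (fun M => ⇑M) (fun M => Finsupp.equivFunOnFinite.symm M)
    (by simp) (by simp) (by simp) (by simp) (by simp)

/-- `∏_{i ≠ l} (1 - yᵢ X)`, whose coefficients are up to sign the elementary symmetric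
polynomials in the other variables. -/
noncomputable def coElementary (y : ι → R) (l : ι) : R[X] :=
  ∏ i ∈ Finset.univ.erase l, (1 - C (y i) * X)

lemma natDegree_coElementary_lt (y : ι → R) (l : ι) :
    (coElementary y l).natDegree < Fintype.card ι := by
  have hle : (coElementary y l).natDegree ≤ (Finset.univ.erase l).card := by
    refine (natDegree_prod_le _ _).trans ((Finset.sum_le_card_nsmul _ _ 1 fun i _ => ?_).trans_eq
      (nsmul_one _))
    compute_degree
  exact hle.trans_lt (Finset.card_erase_lt_of_mem (Finset.mem_univ l))

lemma mk_pow_mul_one_sub (a : R) :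
    PowerSeries.mk (a ^ ·) * (1 - PowerSeries.C a * PowerSeries.X) = 1 := by
  ext (_ | m)
  · simp
  · simp [mul_sub, ← mul_assoc, PowerSeries.coeff_succ_mul_X, PowerSeries.coeff_one, pow_succ]

lemma completeSeries_mul_coElementary (y : ι → R) (l : ι) :
    completeSeries y * coElementary y l = PowerSeries.mk (y l ^ ·) := by
  have hcoe : (coElementary y l : PowerSeries R) =
      ∏ i ∈ Finset.univ.erase l, (1 - PowerSeries.C (y i) * PowerSeries.X) :=
    (map_prod coeToPowerSeries.ringHom _ _).trans (by simp)
  rw [hcoe, completeSeries, ← Finset.mul_prod_erase _ _ (Finset.mem_univ l), mul_assoc,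
    ← Finset.prod_mul_distrib]
  simp [mk_pow_mul_one_sub]

end CompleteSeries

section JacobiTrudi

variable {N : ℕ} {R : Type*} [CommRing R]

/-- The matrix `h_{c i - j}` of the Jacobi–Trudi identity, where `h_m = 0` for `m < 0`. -/
noncomputable def jacobiTrudiMatrix (y : Fin N → R) (c : Fin N → ℕ) :
    Matrix (Fin N) (Fin N) R :=
  Matrix.of fun i j => (PowerSeries.X ^ (j : ℕ) * completeSeries y).coeff (c i)

lemma jacobiTrudiMatrix_mul_coElementary (y : Fin N → R) (c : Fin N → ℕ) :
    jacobiTrudiMatrix y c * Matrix.of (fun j l : Fin N => (coElementary y l).coeff j) =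
      Matrix.of fun i l => y l ^ c i := by
  ext i l
  have hcoe : (coElementary y l : PowerSeries R) =
      ∑ j : Fin N, PowerSeries.C ((coElementary y l).coeff j) * PowerSeries.X ^ (j : ℕ) := by
    have hdeg : (coElementary y l).natDegree < N := by
      simpa using natDegree_coElementary_lt y l
    conv_lhs => rw [(coElementary y l).as_sum_range_C_mul_X_pow' hdeg, Finset.sum_range]
    rw [← Polynomial.coeToPowerSeries.ringHom_apply, map_sum]
    simp
  have hcoeff := congrArg (PowerSeries.coeff (c i)) (completeSeries_mul_coElementary y l)
  rw [hcoe, Finset.mul_sum, map_sum, PowerSeries.coeff_mk] at hcoeff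
  rw [Matrix.of_apply, ← hcoeff, Matrix.mul_apply]
  refine Finset.sum_congr rfl fun j _ => ?_
  rw [jacobiTrudiMatrix, Matrix.of_apply, Matrix.of_apply, mul_left_comm,
    PowerSeries.coeff_C_mul, mul_comm (completeSeries y), mul_comm]

lemma det_jacobiTrudiMatrix_val (y : Fin N → R) :
    (jacobiTrudiMatrix y fun i => (i : ℕ)).det = 1 := by
  rw [Matrix.det_of_isLowerTriangular]
  · simp [jacobiTrudiMatrix, PowerSeries.coeff_X_pow_mul', completeSeries]
  · intro i j hij
    exact (PowerSeries.coeff_X_pow_mul' _ _ _).trans (if_neg (Fin.lt_def.1 hij).not_ge)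

lemma det_jacobiTrudiMatrix_mul_det (y : Fin N → R) (c : Fin N → ℕ) :
    (jacobiTrudiMatrix y c).det * (Matrix.of fun i l : Fin N => y l ^ (i : ℕ)).det =
      (Matrix.of fun i l => y l ^ c i).det := by
  rw [← jacobiTrudiMatrix_mul_coElementary y c,
    ← jacobiTrudiMatrix_mul_coElementary y fun i => (i : ℕ),
    Matrix.det_mul, Matrix.det_mul, det_jacobiTrudiMatrix_val, one_mul]

end JacobiTrudi

section Cauchy

variable {α κ ι R : Type} [Fintype α] [DecidableEq α] [Fintype κ] [Fintype ι]

lemma mem_fixedWords_prod_iff {π : Equiv.Perm α} {w : α → κ × ι} :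
    w ∈ fixedWords (κ × ι) π ↔
      (fun a => (w a).1) ∈ fixedWords κ π ∧ (fun a => (w a).2) ∈ fixedWords ι π := by
  simp [fixedWords, funext_iff, Prod.ext_iff, forall_and]

omit [DecidableEq α] [Fintype κ] in
lemma content_fst (w : α → κ × ι) (i : κ) :
    content (fun a => (w a).1) i = ∑ j, content w (i, j) := by
  rw [content, Finset.card_eq_sum_card_fiberwise (f := fun a => (w a).2) (t := Finset.univ)
    fun _ _ => Finset.mem_univ _]
  simp [content, Finset.filter_filter, Prod.ext_iff]

variable [CommRing R]

lemma sum_piAntidiag_prod_eq_prod_completeSeries (y : ι → R) (μ : κ → ℕ) :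
    (∑ M ∈ Finset.piAntidiag Finset.univ (∑ i, μ i),
        if (fun i => ∑ j, M (i, j)) = μ then ∏ t : κ × ι, y t.2 ^ M t else 0) =
      ∏ i, (completeSeries y).coeff (μ i) := by
  simp_rw [coeff_completeSeries]
  rw [Finset.prod_univ_sum, ← Finset.sum_filter]
  refine Finset.sum_nbij' (fun M i j => M (i, j)) (fun M t => M t.1 t.2) (fun M hM => ?_)
    (fun M hM => ?_) (fun _ _ => rfl) (fun _ _ => rfl) fun M _ => Fintype.prod_prod_type _
  · simpa [funext_iff] using (Finset.mem_filter.1 hM).2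
  · have hM' (i : κ) : ∑ j, M i j = μ i := by simpa using Fintype.mem_piFinset.1 hM i
    simp [Fintype.sum_prod_type, hM']

/-- The Cauchy identity, in terms of power sums. -/
lemma sum_perm_card_fixedWords_smul (y : ι → R) {μ : κ → ℕ} (hμ : ∑ i, μ i = Fintype.card α) :
    ∑ π : Equiv.Perm α, ((fixedWords κ π).filter fun f => content f = μ).card •
        (π.partition.parts.map fun k => ∑ j, y j ^ k).prod =
      (Fintype.card α).factorial • ∏ i, (completeSeries y).coeff (μ i) := by
  rw [← sum_piAntidiag_prod_eq_prod_completeSeries, hμ]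
  refine Eq.trans (Finset.sum_congr rfl fun π _ => ?_) (sum_perm_sum_fixedWords fun M =>
    if (fun i => ∑ j, M (i, j)) = μ then ∏ t : κ × ι, y t.2 ^ M t else 0)
  simp_rw [← content_fst, ← prod_comp_eq_prod_pow_content fun t : κ × ι => y t.2]
  rw [prod_map_sum_pow_eq_sum_fixedWords, ← Finset.sum_const, ← Finset.sum_filter,
    ← Finset.sum_product']
  exact Finset.sum_nbij' (fun p a => (p.1 a, p.2 a)) (fun w => (fun a => (w a).1, fun a => (w a).2))
    (by simp +contextual [mem_fixedWords_prod_iff]) (by simp +contextual [mem_fixedWords_prod_iff])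
    (by simp) (by simp) (by simp)

end Cauchy

/-! ## Alternants and the virtual characters of the symmetric group -/

section Alternants

variable {N : ℕ}

/-- Laurent polynomials in `N` variables with integer coefficients. -/
abbrev LaurentAlg (N : ℕ) : Type := AddMonoidAlgebra ℤ (Fin N → ℤ)

/-- The variables of `LaurentAlg N`. -/
noncomputable def laurentX (i : Fin N) : LaurentAlg N := AddMonoidAlgebra.single (Pi.single i 1) 1

/-- The power sum `∑ xᵢᵏ`. -/
noncomputable def powerSum (N k : ℕ) : LaurentAlg N := ∑ i : Fin N, laurentX i ^ k

/-- The exponent vector `(0, 1, …, N - 1)`. -/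
def staircase (N : ℕ) : Fin N → ℤ := fun i => ((i : ℕ) : ℤ)

/-- The alternant `det (xᵢ ^ cⱼ)`. -/
noncomputable def alternant (c : Fin N → ℤ) : LaurentAlg N :=
  ∑ σ : Equiv.Perm (Fin N), AddMonoidAlgebra.single (c ∘ σ) (Equiv.Perm.sign σ : ℤ)

/-- Antisymmetric functions of `N` integers. -/
def IsAlternating (g : (Fin N → ℤ) → ℤ) : Prop :=
  ∀ (σ : Equiv.Perm (Fin N)) c, g (c ∘ σ) = (Equiv.Perm.sign σ : ℤ) * g c

/-- `g` is supported on nonnegative tuples with sum `s`. -/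
def IsSupportedOn (s : ℤ) (g : (Fin N → ℤ) → ℤ) : Prop :=
  ∀ c, g c ≠ 0 → (∀ i, 0 ≤ c i) ∧ ∑ i, c i = s

lemma laurentX_pow (i : Fin N) (k : ℕ) :
    laurentX i ^ k = AddMonoidAlgebra.single (Pi.single i (k : ℤ)) 1 := by
  rw [laurentX, AddMonoidAlgebra.single_pow, one_pow, ← Pi.single_smul']
  simp

lemma prod_laurentX_pow (c : Fin N → ℕ) :
    ∏ i, laurentX i ^ c i = AddMonoidAlgebra.single (fun i => (c i : ℤ)) 1 := by
  simp_rw [laurentX_pow]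
  rw [AddMonoidAlgebra.prod_single, Finset.univ_sum_single (fun i => (c i : ℤ)),
    Finset.prod_const_one]

lemma alternant_natCast (c : Fin N → ℕ) :
    alternant (fun i => (c i : ℤ)) = (Matrix.of fun i l => laurentX l ^ c i).det := by
  rw [Matrix.det_apply, alternant]
  refine Finset.sum_congr rfl fun σ _ => ?_
  simp only [Matrix.of_apply]
  rw [prod_laurentX_pow fun i => c (σ i), Units.smul_def, AddMonoidAlgebra.smul_single,
    smul_eq_mul, mul_one]
  rfl

lemma coeff_powerSum_mul (k : ℕ) (f : LaurentAlg N) (c : Fin N → ℤ) :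
    (powerSum N k * f).coeff c = ∑ i : Fin N, f.coeff (c - Pi.single i (k : ℤ)) := by
  rw [powerSum, Finset.sum_mul, AddMonoidAlgebra.coeff_sum, Finset.sum_apply']
  refine Finset.sum_congr rfl fun i _ => ?_
  rw [laurentX_pow, AddMonoidAlgebra.coeff_single_mul_apply, one_mul, neg_add_eq_sub]

lemma coeff_alternant (c d : Fin N → ℤ) :
    (alternant c).coeff d = ∑ σ : Equiv.Perm (Fin N),
      if c ∘ σ = d then (Equiv.Perm.sign σ : ℤ) else 0 := by
  rw [alternant, AddMonoidAlgebra.coeff_sum, Finset.sum_apply']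
  refine Finset.sum_congr rfl fun σ _ => ?_
  rw [AddMonoidAlgebra.coeff_single, Finsupp.single_apply]

lemma coeff_alternant_mul (c : Fin N → ℤ) (f : LaurentAlg N) (d : Fin N → ℤ) :
    (alternant c * f).coeff d = ∑ σ : Equiv.Perm (Fin N),
      (Equiv.Perm.sign σ : ℤ) * f.coeff (d - c ∘ σ) := by
  rw [alternant, Finset.sum_mul, AddMonoidAlgebra.coeff_sum, Finset.sum_apply']
  refine Finset.sum_congr rfl fun σ _ => ?_
  rw [AddMonoidAlgebra.coeff_single_mul_apply, neg_add_eq_sub]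

lemma exists_comp_eq_of_coeff_alternant_ne_zero {c d : Fin N → ℤ}
    (h : (alternant c).coeff d ≠ 0) : ∃ σ : Equiv.Perm (Fin N), c ∘ σ = d := by
  rw [coeff_alternant] at h
  obtain ⟨σ, -, hσ⟩ := Finset.exists_ne_zero_of_sum_ne_zero h
  exact ⟨σ, of_not_not fun hne => hσ (if_neg hne)⟩

lemma coeff_alternant_comp {c : Fin N → ℤ} (hc : Function.Injective c)
    (σ : Equiv.Perm (Fin N)) : (alternant c).coeff (c ∘ σ) = (Equiv.Perm.sign σ : ℤ) := by
  simp [coeff_alternant, hc.comp_left.eq_iff]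

lemma isAlternating_coeff_alternant (c : Fin N → ℤ) : IsAlternating (alternant c).coeff := by
  intro τ d
  rw [coeff_alternant, coeff_alternant, Finset.mul_sum, ← Equiv.sum_comp (Equiv.mulRight τ)]
  refine Finset.sum_congr rfl fun σ _ => ?_
  have hiff : (c ∘ σ) ∘ τ = d ∘ τ ↔ c ∘ σ = d := τ.surjective.injective_comp_right.eq_iff
  rw [Function.comp_assoc] at hiff
  simp [hiff, mul_comm]

lemma isSupportedOn_coeff_alternant {c : Fin N → ℤ} (hc : ∀ i, 0 ≤ c i) :
    IsSupportedOn (∑ i, c i) (alternant c).coeff := by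
  intro d hd
  obtain ⟨σ, rfl⟩ := exists_comp_eq_of_coeff_alternant_ne_zero hd
  exact ⟨fun i => hc _, Equiv.sum_comp σ c⟩

lemma IsAlternating.powerSum_mul {f : LaurentAlg N} (hf : IsAlternating f.coeff) (k : ℕ) :
    IsAlternating (powerSum N k * f).coeff := by
  intro τ c
  rw [coeff_powerSum_mul, coeff_powerSum_mul, Finset.mul_sum]
  symm
  rw [← Equiv.sum_comp τ]
  refine Finset.sum_congr rfl fun i _ => ?_
  rw [← hf τ]
  congr 1
  ext j
  simp [Pi.single_apply]

lemma IsSupportedOn.powerSum_mul {f : LaurentAlg N} {s : ℤ} (hf : IsSupportedOn s f.coeff)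
    (k : ℕ) : IsSupportedOn (s + k) (powerSum N k * f).coeff := by
  intro c hc
  rw [coeff_powerSum_mul] at hc
  obtain ⟨i, -, hi⟩ := Finset.exists_ne_zero_of_sum_ne_zero hc
  obtain ⟨hpos, hsum⟩ := hf _ hi
  refine ⟨fun j => (sub_nonneg.1 (hpos j)).trans' ?_, ?_⟩
  · exact (Pi.single_nonneg (α := fun _ : Fin N => ℤ)).2 (Int.natCast_nonneg k) j
  · simpa [Finset.sum_sub_distrib, sub_eq_iff_eq_add] using hsum

lemma IsAlternating.injective_of_ne_zero {g : (Fin N → ℤ) → ℤ} (hg : IsAlternating g)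
    {c : Fin N → ℤ} (h : g c ≠ 0) : Function.Injective c := by
  intro i j hij
  by_contra hne
  have hswap := hg (Equiv.swap i j) c
  rw [Equiv.comp_swap_eq_update, hij, Function.update_eq_self, ← hij, Function.update_eq_self,
    Equiv.Perm.sign_swap hne] at hswap
  push_cast at hswap
  omega

end Alternants

section PowerAlternant

variable {N : ℕ}

/-- The Vandermonde alternant times the power sums `p_k`, `k ∈ m`. -/
noncomputable def powerAlternant (N : ℕ) (m : Multiset ℕ) : LaurentAlg N :=
  alternant (staircase N) * (m.map (powerSum N)).prod

lemma powerAlternant_cons (k : ℕ) (m : Multiset ℕ) :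
    powerAlternant N (k ::ₘ m) = powerSum N k * powerAlternant N m := by
  simp [powerAlternant, mul_left_comm]

lemma powerAlternant_zero : powerAlternant N 0 = alternant (staircase N) := by
  simp [powerAlternant]

lemma isAlternating_powerAlternant (m : Multiset ℕ) :
    IsAlternating (powerAlternant N m).coeff := by
  induction m using Multiset.induction_on with
  | empty => exact powerAlternant_zero ▸ isAlternating_coeff_alternant _
  | cons k m ih => exact powerAlternant_cons k m ▸ ih.powerSum_mul k

lemma isSupportedOn_powerAlternant (m : Multiset ℕ) :
    IsSupportedOn (∑ i, staircase N i + m.sum) (powerAlternant N m).coeff := by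
  induction m using Multiset.induction_on with
  | empty =>
    have h := isSupportedOn_coeff_alternant (c := staircase N) fun i => Int.natCast_nonneg _
    simpa [powerAlternant_zero] using h
  | cons k m ih =>
    rw [powerAlternant_cons, Multiset.sum_cons, Nat.cast_add, add_left_comm, add_comm (k : ℤ)]
    exact ih.powerSum_mul k

end PowerAlternant

section VirtualCharacters

variable {N n : ℕ}

lemma prod_map_powerSum_parts (π : Equiv.Perm (Fin n)) :
    (π.partition.parts.map (powerSum N)).prod = ∑ f ∈ fixedWords (Fin N) π,
      AddMonoidAlgebra.single (fun i => (content f i : ℤ)) 1 := by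
  simp_rw [← prod_laurentX_pow, ← prod_comp_eq_prod_pow_content]
  exact prod_map_sum_pow_eq_sum_fixedWords π laurentX

lemma coeff_prod_map_powerSum_parts (π : Equiv.Perm (Fin n)) (μ : Fin N → ℕ) :
    (π.partition.parts.map (powerSum N)).prod.coeff (fun i => (μ i : ℤ)) =
      ((fixedWords (Fin N) π).filter fun f => content f = μ).card := by
  rw [prod_map_powerSum_parts, AddMonoidAlgebra.coeff_sum, Finset.sum_apply']
  simp [AddMonoidAlgebra.coeff_single, Finsupp.single_apply, funext_iff]

lemma coeff_prod_map_powerSum_parts_of_neg (π : Equiv.Perm (Fin n)) {c : Fin N → ℤ} {i : Fin N}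
    (hi : c i < 0) : (π.partition.parts.map (powerSum N)).prod.coeff c = 0 := by
  rw [prod_map_powerSum_parts, AddMonoidAlgebra.coeff_sum, Finset.sum_apply']
  refine Finset.sum_eq_zero fun f _ => Finsupp.single_eq_of_ne ?_
  rintro rfl
  exact hi.not_ge (Int.natCast_nonneg _)

lemma sum_perm_coeff_smul_prod_map_powerSum (c : Fin N → ℕ) (e : Fin N → ℕ)
    (h : ∑ i, c i = n + ∑ i, e i) :
    ∑ π : Equiv.Perm (Fin n), (π.partition.parts.map (powerSum N)).prod.coeff
        (fun i => (c i : ℤ) - e i) • (π.partition.parts.map (powerSum N)).prod =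
      n.factorial • ∏ i, (PowerSeries.X ^ e i * completeSeries laurentX).coeff (c i) := by
  by_cases hce : e ≤ c
  · simp_rw [PowerSeries.coeff_X_pow_mul', if_pos (hce _), ← Nat.cast_sub (hce _)]
    have hsum : ∑ i, (c i - e i) = Fintype.card (Fin n) := by
      rw [Finset.sum_tsub_distrib _ fun i _ => hce i, h, Fintype.card_fin, Nat.add_sub_cancel]
    refine Eq.trans (Finset.sum_congr rfl fun π _ => ?_)
      ((sum_perm_card_fixedWords_smul laurentX hsum).trans (by rw [Fintype.card_fin]))
    rw [coeff_prod_map_powerSum_parts, natCast_zsmul]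
    rfl
  · obtain ⟨i, hi⟩ := not_forall.1 hce
    rw [Finset.prod_eq_zero (Finset.mem_univ i), smul_zero]
    · refine Finset.sum_eq_zero fun π _ => ?_
      rw [coeff_prod_map_powerSum_parts_of_neg π (i := i) (by simpa using hi), zero_smul]
    · rw [PowerSeries.coeff_X_pow_mul', if_neg hi]

/-- Frobenius' character formula, as an orthogonality relation: the Cauchy identity turns the
left side into the Jacobi–Trudi determinant. -/
lemma sum_perm_coeff_smul_powerAlternant {c : Fin N → ℤ} (h0 : ∀ i, 0 ≤ c i)
    (hc : ∑ i, c i = ∑ i, staircase N i + n) :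
    ∑ π : Equiv.Perm (Fin n), (powerAlternant N π.partition.parts).coeff c •
        powerAlternant N π.partition.parts = n.factorial • alternant c := by
  lift c to Fin N → ℕ using h0
  have hsum (σ : Equiv.Perm (Fin N)) : ∑ i, c i = n + ∑ i, (σ i : ℕ) := by
    rw [Equiv.sum_comp σ fun i : Fin N => (i : ℕ), add_comm]
    rw [← Nat.cast_inj (R := ℤ)]
    simpa [staircase] using hc
  have hdet : ∑ π : Equiv.Perm (Fin n), (powerAlternant N π.partition.parts).coeff
        (fun i => (c i : ℤ)) • (π.partition.parts.map (powerSum N)).prod =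
      n.factorial • (jacobiTrudiMatrix laurentX c).det := by
    simp_rw [powerAlternant, coeff_alternant_mul, Finset.sum_smul]
    rw [Finset.sum_comm, ← Matrix.det_transpose, Matrix.det_apply, Finset.smul_sum]
    refine Finset.sum_congr rfl fun σ _ => ?_
    simp_rw [mul_smul, ← Finset.smul_sum]
    rw [smul_comm, Units.smul_def]
    congr 1
    exact sum_perm_coeff_smul_prod_map_powerSum c _ (hsum σ)
  have hmul := congrArg (alternant (staircase N) * ·) hdet
  simp only [Finset.mul_sum, mul_smul_comm] at hmul
  refine hmul.trans ?_
  have hδ : alternant (staircase N) = (Matrix.of fun i l : Fin N => laurentX l ^ (i : ℕ)).det :=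
    alternant_natCast fun i => (i : ℕ)
  rw [mul_comm (alternant _), hδ, det_jacobiTrudiMatrix_mul_det, ← alternant_natCast]

/-- The virtual character `π ↦ [x^c] (a_δ p_π)` of `Sₙ`, where `a_δ` is the Vandermonde
alternant and `p_π` the power sum product of the cycle type of `π`. -/
noncomputable def vchar (n : ℕ) (c : Fin N → ℤ) (π : Equiv.Perm (Fin n)) : ℂ :=
  ((powerAlternant N π.partition.parts).coeff c : ℤ)

lemma vchar_inv (c : Fin N → ℤ) (π : Equiv.Perm (Fin n)) : vchar n c π⁻¹ = vchar n c π := by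
  simp only [vchar, powerAlternant, prod_map_powerSum_parts, fixedWords_inv]

lemma vchar_mem_virtualChars (c : Fin N → ℤ) :
    vchar n c ∈ virtualChars (Equiv.Perm (Fin n)) := by
  have hsum : vchar n c = ∑ σ : Equiv.Perm (Fin N), (Equiv.Perm.sign σ : ℤ) •
      fun π : Equiv.Perm (Fin n) =>
        (((π.partition.parts.map (powerSum N)).prod.coeff (c - staircase N ∘ σ) : ℤ) : ℂ) := by
    ext π
    rw [vchar, powerAlternant, coeff_alternant_mul]
    simp
  rw [hsum]
  refine sum_mem fun σ _ => Submodule.smul_mem _ _ ?_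
  by_cases h0 : ∀ i, 0 ≤ (c - staircase N ∘ σ) i
  · lift c - staircase N ∘ σ to Fin N → ℕ using h0 with μ
    simp_rw [coeff_prod_map_powerSum_parts, Int.cast_natCast]
    exact card_filter_fixedWords_mem_virtualChars μ
  · obtain ⟨i, hi⟩ := not_forall.1 h0
    simp_rw [coeff_prod_map_powerSum_parts_of_neg _ (not_le.1 hi), Int.cast_zero]
    exact zero_mem _

lemma charInner_vchar {c : Fin N → ℤ} (h0 : ∀ i, 0 ≤ c i)
    (hc : ∑ i, c i = ∑ i, staircase N i + n) (d : Fin N → ℤ) :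
    charInner (vchar n c) (vchar n d) = ((alternant c).coeff d : ℤ) := by
  have h := congrArg (fun f => ((f.coeff d : ℤ) : ℂ)) (sum_perm_coeff_smul_powerAlternant h0 hc)
  simp only [AddMonoidAlgebra.coeff_sum, Finset.sum_apply', AddMonoidAlgebra.coeff_smul,
    Finsupp.smul_apply, Int.cast_sum, smul_eq_mul, Int.cast_mul] at h
  rw [nsmul_eq_mul, Int.cast_mul, Int.cast_natCast] at h
  have hn : (n.factorial : ℂ) ≠ 0 := by exact_mod_cast n.factorial_ne_zero
  rw [charInner_apply, Nat.card_eq_fintype_card, Fintype.card_perm, Fintype.card_fin,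
    inv_mul_eq_iff_eq_mul₀ hn, ← h]
  simp_rw [vchar_inv, vchar]

end VirtualCharacters

/-! ## Beta sets and the irreducible characters of the symmetric group -/

section Enumeration

variable {N : ℕ}

/-- The increasing enumeration of a set of `N` natural numbers (`0` for sets of another size). -/
noncomputable def enum (N : ℕ) (A : Finset ℕ) : Fin N → ℕ :=
  if h : A.card = N then A.orderEmbOfFin h else 0

lemma strictMono_enum {A : Finset ℕ} (h : A.card = N) : StrictMono (enum N A) := by
  rw [enum, dif_pos h]
  exact (A.orderEmbOfFin h).strictMono

lemma image_enum {A : Finset ℕ} (h : A.card = N) : Finset.univ.image (enum N A) = A := by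
  rw [enum, dif_pos h]
  exact Finset.image_orderEmbOfFin_univ A h

lemma card_image_of_strictMono {f : Fin N → ℕ} (hf : StrictMono f) :
    (Finset.univ.image f).card = N := by
  rw [Finset.card_image_of_injective _ hf.injective, Finset.card_univ, Fintype.card_fin]

lemma enum_image {f : Fin N → ℕ} (hf : StrictMono f) : enum N (Finset.univ.image f) = f := by
  have h := card_image_of_strictMono hf
  rw [enum, dif_pos h]
  exact (Finset.orderEmbOfFin_unique h (by simp) hf).symm

lemma sum_enum {A : Finset ℕ} (h : A.card = N) : ∑ i, enum N A i = ∑ x ∈ A, x := by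
  conv_rhs => rw [← image_enum h]
  rw [Finset.sum_image fun _ _ _ _ h' => (strictMono_enum h).injective h']

lemma exists_monotone_map_univ_eq (m : Multiset ℕ) (hm : m.card = N) :
    ∃ f : Fin N → ℕ, Monotone f ∧ Finset.univ.val.map f = m := by
  obtain rfl : (m.sort (· ≤ ·)).length = N := by simpa
  exact ⟨(m.sort (· ≤ ·)).get, (m.pairwise_sort (· ≤ ·)).sortedLE.monotone_get,
    by rw [Fin.univ_val_map, List.ofFn_get, Multiset.sort_eq]⟩

end Enumeration

section BetaSets

variable {N n : ℕ}

/-- Beta sets: the sets of `N` natural numbers with sum `0 + 1 + ⋯ + (N - 1) + n`. Those with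
increasing enumeration `a` correspond to the partitions `(aᵢ - i)ᵢ` of `n` into at most `N`
parts. -/
noncomputable def betaSets (N n : ℕ) : Finset (Finset ℕ) :=
  (Finset.range (∑ i : Fin N, (i : ℕ) + n + 1)).powerset.filter fun A =>
    A.card = N ∧ ∑ x ∈ A, x = ∑ i : Fin N, (i : ℕ) + n

lemma mem_betaSets {A : Finset ℕ} :
    A ∈ betaSets N n ↔ A.card = N ∧ ∑ x ∈ A, x = ∑ i : Fin N, (i : ℕ) + n := by
  simp only [betaSets, Finset.mem_filter, Finset.mem_powerset, and_iff_right_iff_imp, and_imp]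
  intro _ h x hx
  have := Finset.single_le_sum (f := fun x : ℕ => x) (fun _ _ => Nat.zero_le _) hx
  rw [Finset.mem_range]
  omega

lemma card_partition_le_card_betaSets (h : n ≤ N) :
    Fintype.card n.Partition ≤ (betaSets N n).card := by
  have hcard (p : n.Partition) : p.parts.card ≤ N := by
    have := p.parts.card_nsmul_le_sum (a := 1) fun x hx => p.parts_pos hx
    rw [p.parts_sum, smul_eq_mul, mul_one] at this
    exact this.trans h
  choose f hf hfp using fun p : n.Partition => exists_monotone_map_univ_eq (N := N)
    (p.parts + Multiset.replicate (N - p.parts.card) 0) (by simp [hcard])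
  have hmono (p : n.Partition) : StrictMono fun i : Fin N => f p i + i := fun i j hij =>
    add_lt_add_of_le_of_lt (hf p hij.le) hij
  have hparts (p : n.Partition) : p.parts = (Finset.univ.val.map (f p)).filter (0 < ·) := by
    rw [hfp, Multiset.filter_add, Multiset.filter_eq_self.2 fun x hx => p.parts_pos hx,
      Multiset.filter_eq_nil.2 fun x hx => (Multiset.eq_of_mem_replicate hx).not_gt, add_zero]
  refine Finset.card_le_card_of_injOn (s := Finset.univ)
    (fun p => Finset.univ.image fun i => f p i + i) (fun p _ => ?_) fun p _ q _ hpq => ?_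
  · rw [Finset.mem_coe, mem_betaSets]
    refine ⟨card_image_of_strictMono (hmono p), ?_⟩
    rw [Finset.sum_image (hmono p).injective.injOn, Finset.sum_add_distrib, add_comm,
      Finset.sum_eq_multiset_sum Finset.univ (f p), hfp]
    simp [p.parts_sum]
  · have henum := congrArg (enum N) hpq
    rw [enum_image (hmono p), enum_image (hmono q)] at henum
    have hfpq : f p = f q := funext fun i => Nat.add_right_cancel (congrFun henum i)
    exact Nat.Partition.ext (by rw [hparts p, hparts q, hfpq])

/-- The increasing exponent vector with entries the elements of `A`. -/
noncomputable def expVec (N : ℕ) (A : Finset ℕ) : Fin N → ℤ := fun i => (enum N A i : ℤ)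

lemma expVec_nonneg (A : Finset ℕ) (i : Fin N) : 0 ≤ expVec N A i := Int.natCast_nonneg _

lemma expVec_injective {A : Finset ℕ} (hA : A.card = N) : Function.Injective (expVec N A) :=
  Nat.cast_injective.comp (strictMono_enum hA).injective

lemma range_expVec {A : Finset ℕ} (hA : A.card = N) :
    Set.range (expVec N A) = (Nat.cast : ℕ → ℤ) '' A := by
  conv_rhs => rw [← image_enum hA, Finset.coe_image, Finset.coe_univ, Set.image_univ]
  exact Set.range_comp _ _

lemma sum_expVec {A : Finset ℕ} (hA : A ∈ betaSets N n) :
    ∑ i, expVec N A i = ∑ i, staircase N i + n := by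
  rw [mem_betaSets] at hA
  simp only [expVec, staircase]
  exact_mod_cast (sum_enum hA.1).trans hA.2

lemma eq_of_expVec_comp_eq {A A' : Finset ℕ} (hA : A.card = N) (hA' : A'.card = N)
    {σ : Equiv.Perm (Fin N)} (h : expVec N A ∘ σ = expVec N A') : A = A' := by
  have hrange := congrArg Set.range h
  rw [σ.surjective.range_comp, range_expVec hA, range_expVec hA'] at hrange
  exact Finset.coe_injective (Nat.cast_injective.image_injective hrange)

lemma coeff_alternant_expVec {A A' : Finset ℕ} (hA : A.card = N) (hA' : A'.card = N) :
    (alternant (expVec N A)).coeff (expVec N A') = if A = A' then 1 else 0 := by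
  split_ifs with h
  · subst h
    simpa using coeff_alternant_comp (expVec_injective hA) 1
  · by_contra hne
    obtain ⟨σ, hσ⟩ := exists_comp_eq_of_coeff_alternant_ne_zero hne
    exact h (eq_of_expVec_comp_eq hA hA' hσ)

end BetaSets

section Irreducibles

variable {N n : ℕ}

/-- The virtual character of a beta set. -/
noncomputable def bchar (N n : ℕ) (A : Finset ℕ) : Equiv.Perm (Fin n) → ℂ :=
  vchar n (expVec N A)

lemma charInner_bchar {A A' : Finset ℕ} (hA : A ∈ betaSets N n) (hA' : A'.card = N) :
    charInner (bchar N n A) (bchar N n A') = if A = A' then 1 else 0 := by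
  rw [bchar, bchar, charInner_vchar (expVec_nonneg A) (sum_expVec hA),
    coeff_alternant_expVec (mem_betaSets.1 hA).1 hA']
  split_ifs <;> simp

lemma exists_isIrrChar_smul_bchar {A : Finset ℕ} (hA : A ∈ betaSets N n) :
    ∃ s : ℤˣ, IsIrrChar (Equiv.Perm (Fin n)) (s • bchar N n A) :=
  exists_isIrrChar_of_charInner_self (vchar_mem_virtualChars _)
    (by rw [charInner_bchar hA (mem_betaSets.1 hA).1, if_pos rfl])

/-- The sign making `bchar N n A` an irreducible character (`1` if there is none). -/
noncomputable def bsign (N n : ℕ) (A : Finset ℕ) : ℤˣ :=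
  if h : ∃ s : ℤˣ, IsIrrChar (Equiv.Perm (Fin n)) (s • bchar N n A) then h.choose else 1

/-- The irreducible character of a beta set. -/
noncomputable def irrChar (N n : ℕ) (A : Finset ℕ) : Equiv.Perm (Fin n) → ℂ :=
  bsign N n A • bchar N n A

lemma isIrrChar_irrChar {A : Finset ℕ} (hA : A ∈ betaSets N n) :
    IsIrrChar (Equiv.Perm (Fin n)) (irrChar N n A) := by
  have h := exists_isIrrChar_smul_bchar hA
  rw [irrChar, bsign, dif_pos h]
  exact h.choose_spec

lemma bchar_eq_smul_irrChar (A : Finset ℕ) : bchar N n A = bsign N n A • irrChar N n A := by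
  rw [irrChar, smul_smul, Int.units_mul_self, one_smul]

lemma irrChar_injOn : Set.InjOn (irrChar N n) (betaSets N n) := by
  intro A hA A' hA' h
  by_contra hne
  have h0 := charInner_bchar hA (mem_betaSets.1 hA').1
  rw [if_neg hne, bchar_eq_smul_irrChar, bchar_eq_smul_irrChar A', h, Units.smul_def,
    Units.smul_def, map_zsmul, map_zsmul, LinearMap.smul_apply,
    (isIrrChar_irrChar hA').charInner_eq (isIrrChar_irrChar hA'), if_pos rfl] at h0
  simp at h0

/-- The cycle type of `π`, as a partition of `n`. -/
def cycleParts (π : Equiv.Perm (Fin n)) : n.Partition where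
  parts := π.partition.parts
  parts_pos h := π.partition.parts_pos h
  parts_sum := by rw [π.partition.parts_sum, Fintype.card_fin]

/-- The functions on `Sₙ` that depend only on the cycle type and vanish unless it lies in `s`. -/
noncomputable def classFun (s : Finset n.Partition) : Submodule ℂ (Equiv.Perm (Fin n) → ℂ) :=
  Submodule.span ℂ (s.image fun p π => if cycleParts π = p then 1 else 0 :
    Finset (Equiv.Perm (Fin n) → ℂ))

lemma finrank_classFun_le (s : Finset n.Partition) : Module.finrank ℂ (classFun s) ≤ s.card :=
  (finrank_span_finset_le_card _).trans Finset.card_image_le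

lemma mem_classFun {s : Finset n.Partition} {f : Equiv.Perm (Fin n) → ℂ}
    (hf : ∀ π π', cycleParts π = cycleParts π' → f π = f π')
    (h0 : ∀ π, cycleParts π ∉ s → f π = 0) : f ∈ classFun s := by
  obtain ⟨g, rfl⟩ : ∃ g, f = g ∘ cycleParts :=
    ⟨Function.extend cycleParts f fun _ => 0,
      (Function.FactorsThrough.extend_comp (fun _ => 0) fun π π' h => hf π π' h).symm⟩
  have hg : g ∘ cycleParts = ∑ p ∈ s, g p • fun π => if cycleParts π = p then (1 : ℂ) else 0 := by
    ext π
    by_cases hπ : cycleParts π ∈ s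
    · simp [hπ]
    · simpa [hπ] using h0 π hπ
  rw [hg]
  exact sum_mem fun p hp => Submodule.smul_mem _ _
    (Submodule.subset_span (Finset.mem_image_of_mem _ hp))

lemma IsIrrChar.eq_of_cycleParts_eq {f : Equiv.Perm (Fin n) → ℂ} (hf : IsIrrChar _ f)
    (π π' : Equiv.Perm (Fin n)) (h : cycleParts π = cycleParts π') : f π = f π' := by
  obtain ⟨V, -, rfl⟩ := hf
  have hpart : π.partition = π'.partition :=
    Nat.Partition.ext (congrArg (fun p : n.Partition => p.parts) h :)
  obtain ⟨g, rfl⟩ := isConj_iff.1 (Equiv.Perm.partition_eq_of_isConj.2 hpart)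
  exact (V.char_conj _ _).symm

lemma card_le_card_partition {s : Finset (Equiv.Perm (Fin n) → ℂ)}
    (hs : ∀ f ∈ s, IsIrrChar _ f) : s.card ≤ Fintype.card n.Partition := by
  have hortho : charInner.iIsOrtho ((↑) : s → Equiv.Perm (Fin n) → ℂ) := fun f g hfg =>
    ((hs f f.2).charInner_eq (hs g g.2)).trans (if_neg (Subtype.coe_injective.ne hfg))
  have hli : LinearIndependent ℂ ((↑) : s → Equiv.Perm (Fin n) → ℂ) :=
    LinearMap.BilinForm.linearIndependent_of_iIsOrtho hortho fun f => by
      simp [(hs f f.2).charInner_eq (hs f f.2)]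
  have hle : Submodule.span ℂ (s : Set (Equiv.Perm (Fin n) → ℂ)) ≤ classFun Finset.univ :=
    Submodule.span_le.2 fun f hf => mem_classFun (hs f hf).eq_of_cycleParts_eq (by simp)
  rw [← finrank_span_finset_eq_card hli]
  exact (Submodule.finrank_mono hle).trans (finrank_classFun_le _)

lemma exists_irrChar_eq (hnN : n ≤ N) {f : Equiv.Perm (Fin n) → ℂ} (hf : IsIrrChar _ f) :
    ∃ A ∈ betaSets N n, irrChar N n A = f := by
  rw [← Finset.mem_image]
  by_contra hne
  have h := card_le_card_partition (s := insert f ((betaSets N n).image (irrChar N n))) (by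
    simpa [hf] using fun A => isIrrChar_irrChar)
  rw [Finset.card_insert_of_notMem hne, Finset.card_image_of_injOn irrChar_injOn] at h
  have := card_partition_le_card_betaSets hnN
  omega

end Irreducibles

/-! ## Twisting by the sign character -/

section Complement

variable {N : ℕ}

/-- The numbers `0, …, 2N - 1`, indexed so that swapping the summands is `p ↦ 2N - 1 - p`. -/
def foldPos : Fin N ⊕ Fin N → ℤ :=
  Sum.elim (fun i => i) fun i => 2 * N - 1 - i

lemma foldPos_inl (i : Fin N) : foldPos (Sum.inl i) = i := rfl

lemma foldPos_inr (i : Fin N) : foldPos (Sum.inr i) = 2 * N - 1 - i := rfl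

lemma foldPos_swap (x : Fin N ⊕ Fin N) : foldPos x.swap = 2 * N - 1 - foldPos x := by
  rcases x with i | i <;> simp [foldPos_inl, foldPos_inr]

lemma foldPos_injective : Function.Injective (foldPos (N := N)) := by
  rintro (i | i) (j | j) h <;> simp only [foldPos_inl, foldPos_inr] at h
  · congr; ext; omega
  · omega
  · omega
  · congr; ext; omega

lemma exists_foldPos_eq {p : ℤ} (h0 : 0 ≤ p) (h1 : p < 2 * N) :
    ∃ x : Fin N ⊕ Fin N, foldPos x = p := by
  by_cases h : p < N
  · exact ⟨Sum.inl ⟨p.toNat, by omega⟩, by simp [foldPos_inl, h0]⟩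
  · exact ⟨Sum.inr ⟨(2 * N - 1 - p).toNat, by omega⟩, by simp only [foldPos_inr]; omega⟩

lemma foldPos_lt (x : Fin N ⊕ Fin N) : foldPos x < 2 * N := by
  rcases x with i | i <;> simp only [foldPos_inl, foldPos_inr] <;> omega

/-- The first half of the arrangement `w` of `0, …, 2N - 1`, as an exponent vector. -/
def lowerVec (w : Equiv.Perm (Fin N ⊕ Fin N)) : Fin N → ℤ := fun i => foldPos (w (Sum.inl i))

/-- Exchange the two halves of an arrangement of `0, …, 2N - 1` and apply `p ↦ 2N - 1 - p`. -/
def complPerm (w : Equiv.Perm (Fin N ⊕ Fin N)) : Equiv.Perm (Fin N ⊕ Fin N) :=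
  (Equiv.sumComm _ _).permCongr w

lemma complPerm_apply_swap (w : Equiv.Perm (Fin N ⊕ Fin N)) (x : Fin N ⊕ Fin N) :
    complPerm w x.swap = (w x).swap := by
  simp [complPerm]

lemma complPerm_sumCongr (σ τ : Equiv.Perm (Fin N)) :
    complPerm (Equiv.Perm.sumCongr σ τ) = Equiv.Perm.sumCongr τ σ := by
  ext (i | i) <;> simp [complPerm]

lemma complPerm_mul_swap (w : Equiv.Perm (Fin N ⊕ Fin N)) (i j : Fin N) :
    complPerm (w * Equiv.swap (Sum.inl i) (Sum.inr j)) =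
      complPerm w * Equiv.swap (Sum.inl j) (Sum.inr i) := by
  rw [complPerm, complPerm, Equiv.permCongr_mul, Equiv.permCongr_def _ (Equiv.swap _ _),
    Equiv.symm_trans_swap_trans, Equiv.swap_comm]
  rfl

lemma foldPos_mem_range_lowerVec {w : Equiv.Perm (Fin N ⊕ Fin N)} {x : Fin N ⊕ Fin N} :
    foldPos (w x) ∈ Set.range (lowerVec w) ↔ x.isLeft := by
  simp only [Set.mem_range, lowerVec, foldPos_injective.eq_iff, w.injective.eq_iff]
  rcases x with i | i <;> simp

lemma exists_lowerVec_eq {c : Fin N → ℤ} (hc : Function.Injective c) (h0 : ∀ i, 0 ≤ c i)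
    (h1 : ∀ i, c i < 2 * N) : ∃ w, lowerVec w = c := by
  choose u hu using fun i => exists_foldPos_eq (h0 i) (h1 i)
  have hinj : Function.Injective u := fun i j hij => hc (by rw [← hu, hij, hu])
  obtain ⟨g, hg⟩ := Set.MapsTo.exists_equiv_extend_of_card_eq
    (α := Fin N ⊕ Fin N) (t := (Finset.univ : Finset (Fin N ⊕ Fin N))) (by simp)
    (s := Set.range Sum.inl) (f := Sum.elim u u) (by intro; simp) (by
      rintro _ ⟨i, rfl⟩ _ ⟨j, rfl⟩ hij
      exact congrArg Sum.inl (hinj hij))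
  refine ⟨g.trans (Equiv.subtypeUnivEquiv (by simp)), funext fun i => ?_⟩
  rw [← hu]
  exact congrArg foldPos (hg (Sum.inl i) ⟨i, rfl⟩)

end Complement

section SignTwist

variable {N n : ℕ}

/-- `f` and `g` correspond, up to the sign `κ`, under complementation of exponents. -/
def IsDual (κ : ℤ) (f g : (Fin N → ℤ) → ℤ) : Prop :=
  ∀ w : Equiv.Perm (Fin N ⊕ Fin N),
    f (lowerVec w) = κ * Equiv.Perm.sign w * g (lowerVec (complPerm w))

lemma mapsTo_inl_of_coeff_alternant_staircase_ne_zero {w : Equiv.Perm (Fin N ⊕ Fin N)}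
    (h : (alternant (staircase N)).coeff (lowerVec w) ≠ 0) :
    Set.MapsTo w (Set.range Sum.inl) (Set.range Sum.inl) := by
  obtain ⟨σ, hσ⟩ := exists_comp_eq_of_coeff_alternant_ne_zero h
  rintro _ ⟨i, rfl⟩
  exact ⟨σ i, foldPos_injective (congrFun hσ i)⟩

lemma staircase_injective : Function.Injective (staircase N) :=
  fun _ _ h => Fin.ext (Nat.cast_injective (R := ℤ) h)

lemma isDual_alternant_staircase :
    IsDual 1 (alternant (staircase N)).coeff (alternant (staircase N)).coeff := by
  intro w
  by_cases hw : Set.MapsTo w (Set.range Sum.inl) (Set.range Sum.inl)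
  · obtain ⟨⟨σ, τ⟩, rfl⟩ := Equiv.Perm.mem_sumCongrHom_range_of_perm_mapsTo_inl hw
    have hlower (σ τ : Equiv.Perm (Fin N)) :
        lowerVec (Equiv.Perm.sumCongr σ τ) = staircase N ∘ σ := rfl
    rw [Equiv.Perm.sumCongrHom_apply, complPerm_sumCongr, hlower, hlower,
      coeff_alternant_comp staircase_injective, coeff_alternant_comp staircase_injective,
      Equiv.Perm.sign_sumCongr, Units.val_mul, one_mul, mul_assoc, Int.units_coe_mul_self, mul_one]
  · have hw' : ¬ Set.MapsTo (complPerm w) (Set.range Sum.inl) (Set.range Sum.inl) := by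
      rw [Equiv.Perm.perm_mapsTo_inl_iff_mapsTo_inr] at hw
      contrapose! hw
      rintro _ ⟨i, rfl⟩
      obtain ⟨j, hj⟩ := hw ⟨i, rfl⟩
      refine ⟨j, Sum.swap_leftInverse.injective ?_⟩
      rw [← complPerm_apply_swap]
      exact hj
    rw [not_imp_comm.1 mapsTo_inl_of_coeff_alternant_staircase_ne_zero hw,
      not_imp_comm.1 mapsTo_inl_of_coeff_alternant_staircase_ne_zero hw', mul_zero]

lemma lowerVec_mul_swap {w : Equiv.Perm (Fin N ⊕ Fin N)} {i j : Fin N} {k : ℕ}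
    (h : foldPos (w (Sum.inr j)) + k = foldPos (w (Sum.inl i))) :
    lowerVec (w * Equiv.swap (Sum.inl i) (Sum.inr j)) = lowerVec w - Pi.single i (k : ℤ) := by
  ext l
  rcases eq_or_ne l i with rfl | hl
  · simp [lowerVec, ← h]
  · simp [lowerVec, hl, Equiv.swap_apply_of_ne_of_ne]

lemma exists_foldPos_inr_add_eq {f : (Fin N → ℤ) → ℤ} {s : ℤ} (hf : IsAlternating f)
    (hs : IsSupportedOn s f) {w : Equiv.Perm (Fin N ⊕ Fin N)} {i : Fin N} {k : ℕ} (hk : 0 < k)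
    (hne : f (lowerVec w - Pi.single i (k : ℤ)) ≠ 0) :
    ∃ j, foldPos (w (Sum.inr j)) + k = foldPos (w (Sum.inl i)) := by
  have h0 := (hs _ hne).1 i
  rw [Pi.sub_apply, Pi.single_eq_same] at h0
  have hlt : lowerVec w i < 2 * N := foldPos_lt _
  obtain ⟨x, hx⟩ := exists_foldPos_eq (N := N) h0 (by omega)
  obtain ⟨l | j, rfl⟩ := w.surjective x
  · have hli : l ≠ i := by
      rintro rfl
      simp only [lowerVec] at hx
      omega
    refine absurd (hf.injective_of_ne_zero hne (a₁ := l) (a₂ := i) ?_) hli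
    simpa [hli, lowerVec] using hx
  · exact ⟨j, by rw [hx]; exact sub_add_cancel _ _⟩

-- The Murnaghan–Nakayama rule: multiplication by `p_k` moves a single bead up by `k`.
lemma coeff_powerSum_mul_lowerVec {f : LaurentAlg N} {s : ℤ} (hf : IsAlternating f.coeff)
    (hs : IsSupportedOn s f.coeff) {k : ℕ} (hk : 0 < k) (w : Equiv.Perm (Fin N ⊕ Fin N)) :
    (powerSum N k * f).coeff (lowerVec w) =
      ∑ i, ∑ j, if foldPos (w (Sum.inr j)) + k = foldPos (w (Sum.inl i)) then
        f.coeff (lowerVec (w * Equiv.swap (Sum.inl i) (Sum.inr j))) else 0 := by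
  rw [coeff_powerSum_mul]
  refine Finset.sum_congr rfl fun i _ => ?_
  by_cases hj : ∃ j, foldPos (w (Sum.inr j)) + k = foldPos (w (Sum.inl i))
  · obtain ⟨j, hj⟩ := hj
    rw [Finset.sum_eq_single j, if_pos hj, lowerVec_mul_swap hj]
    · intro j' _ hj'
      refine if_neg fun h => hj' ?_
      simpa [foldPos_injective.eq_iff] using h.trans hj.symm
    · simp
  · rw [not_imp_comm.1 (exists_foldPos_inr_add_eq hf hs hk) hj]
    push Not at hj
    simp [hj]

lemma IsDual.powerSum_mul {κ : ℤ} {f g : LaurentAlg N} {s t : ℤ} (h : IsDual κ f.coeff g.coeff)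
    (hf : IsAlternating f.coeff) (hg : IsAlternating g.coeff) (hfs : IsSupportedOn s f.coeff)
    (hgs : IsSupportedOn t g.coeff) {k : ℕ} (hk : 0 < k) :
    IsDual (-κ) (powerSum N k * f).coeff (powerSum N k * g).coeff := by
  intro w
  have hiff (i j : Fin N) : foldPos (complPerm w (Sum.inr i)) + k =
      foldPos (complPerm w (Sum.inl j)) ↔
        foldPos (w (Sum.inr j)) + k = foldPos (w (Sum.inl i)) := by
    rw [← Sum.swap_inl (x := i), ← Sum.swap_inr (x := j), complPerm_apply_swap,
      complPerm_apply_swap, foldPos_swap, foldPos_swap]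
    omega
  rw [coeff_powerSum_mul_lowerVec hf hfs hk, coeff_powerSum_mul_lowerVec hg hgs hk,
    Finset.sum_comm, Finset.mul_sum]
  refine Finset.sum_congr rfl fun j _ => ?_
  rw [Finset.mul_sum]
  refine Finset.sum_congr rfl fun i _ => ?_
  simp only [hiff, mul_ite, mul_zero]
  refine if_congr Iff.rfl ?_ rfl
  rw [h, complPerm_mul_swap, Equiv.Perm.sign_mul, Equiv.Perm.sign_swap Sum.inl_ne_inr]
  push_cast
  ring

lemma isDual_powerAlternant {m : Multiset ℕ} (hm : ∀ k ∈ m, 0 < k) :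
    IsDual ((-1) ^ m.card) (powerAlternant N m).coeff (powerAlternant N m).coeff := by
  induction m using Multiset.induction_on with
  | empty => rw [powerAlternant_zero]; exact isDual_alternant_staircase
  | cons k m ih =>
    rw [powerAlternant_cons, Multiset.card_cons, pow_succ, mul_neg_one]
    exact (ih fun k hk => hm k (Multiset.mem_cons_of_mem hk)).powerSum_mul
      (isAlternating_powerAlternant m) (isAlternating_powerAlternant m)
      (isSupportedOn_powerAlternant m) (isSupportedOn_powerAlternant m)
      (hm k (Multiset.mem_cons_self k m))

lemma neg_one_pow_card_parts (π : Equiv.Perm (Fin n)) :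
    (-1 : ℤ) ^ π.partition.parts.card = (-1) ^ n * Equiv.Perm.sign π := by
  have h1 : π.support.card ≤ n := by simpa using Finset.card_le_univ π.support
  rw [Equiv.Perm.parts_partition, Multiset.card_add, Multiset.card_replicate,
    Equiv.Perm.sign_of_cycleType, Equiv.Perm.sum_cycleType, Fintype.card_fin]
  push_cast
  rw [← pow_add]
  apply neg_one_pow_congr
  simp only [Nat.even_add, Nat.even_sub h1]
  tauto

lemma vchar_lowerVec (w : Equiv.Perm (Fin N ⊕ Fin N)) (π : Equiv.Perm (Fin n)) :
    vchar n (lowerVec w) π = ((-1) ^ n * Equiv.Perm.sign w : ℤ) *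
      ((Equiv.Perm.sign π : ℤ) * vchar n (lowerVec (complPerm w)) π) := by
  rw [vchar, vchar, isDual_powerAlternant (fun k hk => π.partition.parts_pos hk) w,
    neg_one_pow_card_parts]
  push_cast
  ring

lemma range_lowerVec_complPerm {A : Finset ℕ} (hA : A ∈ betaSets N n)
    (h : (fun π => ((Equiv.Perm.sign π : ℤ) : ℂ) * bchar N n A π) = bchar N n A)
    {w : Equiv.Perm (Fin N ⊕ Fin N)} (hw : lowerVec w = expVec N A) :
    Set.range (lowerVec (complPerm w)) = Set.range (expVec N A) := by
  have hdual : bchar N n A =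
      (((-1) ^ n * Equiv.Perm.sign w : ℤ) : ℂ) • vchar n (lowerVec (complPerm w)) := by
    ext π
    have hsign : ((Equiv.Perm.sign π : ℤ) : ℂ) * (Equiv.Perm.sign π : ℤ) = 1 := by
      rw [← Int.cast_mul, Int.units_coe_mul_self, Int.cast_one]
    rw [← congrFun h π, bchar, ← hw, vchar_lowerVec, mul_left_comm,
      ← mul_assoc ((Equiv.Perm.sign π : ℤ) : ℂ), hsign, one_mul, Pi.smul_apply, smul_eq_mul]
  have hne : (alternant (expVec N A)).coeff (lowerVec (complPerm w)) ≠ 0 := by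
    intro h0
    have h1 := charInner_bchar hA (mem_betaSets.1 hA).1
    nth_rewrite 2 [hdual] at h1
    rw [map_smul, bchar, charInner_vchar (expVec_nonneg A) (sum_expVec hA), h0] at h1
    simp at h1
  obtain ⟨σ, hσ⟩ := exists_comp_eq_of_coeff_alternant_ne_zero hne
  rw [← hσ, σ.surjective.range_comp]

lemma lt_two_mul_of_mem_betaSets (hnN : n ≤ N) {A : Finset ℕ} (hA : A ∈ betaSets N n) {p : ℕ}
    (hp : p ∈ A) : p < 2 * N := by
  obtain ⟨hcard, hsum⟩ := mem_betaSets.1 hA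
  obtain _ | N := N
  · simp [Finset.card_eq_zero.1 hcard] at hp
  have h : ∑ i ∈ Finset.range N, i ≤ ∑ x ∈ A.erase p, x := by
    have h := Finset.sum_range_le_sum (s := (A.erase p).map Nat.castEmbedding) (c := 0)
      (Finset.forall_mem_map.2 fun x _ => Int.natCast_nonneg x)
    rw [Finset.sum_map, Finset.card_map, Finset.card_erase_of_mem hp, hcard,
      Nat.add_sub_cancel] at h
    simp only [zero_add, Nat.castEmbedding_apply] at h
    zify
    exact h
  rw [← Finset.add_sum_erase A _ hp, Fin.sum_univ_eq_sum_range (fun i => i),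
    Finset.sum_range_succ] at hsum
  omega

lemma mem_iff_notMem_of_sign_mul_eq (hnN : n ≤ N) {A : Finset ℕ} (hA : A ∈ betaSets N n)
    (h : (fun π => ((Equiv.Perm.sign π : ℤ) : ℂ) * irrChar N n A π) = irrChar N n A) {p : ℕ}
    (hp : p < 2 * N) : p ∈ A ↔ 2 * N - 1 - p ∉ A := by
  have hA1 := (mem_betaSets.1 hA).1
  have hmem (q : ℕ) : q ∈ A ↔ (q : ℤ) ∈ Set.range (expVec N A) := by
    simp [range_expVec hA1]
  have hlt (i : Fin N) : expVec N A i < 2 * N := by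
    obtain ⟨q, hq, hqi⟩ := range_expVec hA1 ▸ Set.mem_range_self i
    rw [← hqi]
    exact_mod_cast lt_two_mul_of_mem_betaSets hnN hA hq
  obtain ⟨w, hw⟩ := exists_lowerVec_eq (expVec_injective hA1) (expVec_nonneg A) hlt
  have hb : (fun π => ((Equiv.Perm.sign π : ℤ) : ℂ) * bchar N n A π) = bchar N n A := by
    ext π
    have hπ := congrFun h π
    simp only [bchar_eq_smul_irrChar, Pi.smul_apply, mul_smul_comm] at hπ ⊢
    rw [hπ]
  obtain ⟨x, hx⟩ := exists_foldPos_eq (N := N) (p := p) (by positivity) (by omega)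
  obtain ⟨y, rfl⟩ := w.surjective x
  have hcast : ((2 * N - 1 - p : ℕ) : ℤ) = foldPos (complPerm w y.swap) := by
    rw [complPerm_apply_swap, foldPos_swap, hx]
    omega
  rw [hmem, hmem, hcast, ← hx]
  nth_rewrite 1 [← hw]
  rw [← range_lowerVec_complPerm hA hb hw, foldPos_mem_range_lowerVec, foldPos_mem_range_lowerVec]
  rcases y with i | i <;> simp

end SignTwist

/-! ## Characters vanishing off the 2-regular elements -/

section Dilation

variable {N : ℕ}

/-- The substitution `xᵢ ↦ xᵢ²`. -/
noncomputable def dilate (N : ℕ) : LaurentAlg N →+* LaurentAlg N :=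
  AddMonoidAlgebra.mapDomainRingHom ℤ (nsmulAddMonoidHom 2)

lemma dilate_single (c : Fin N → ℤ) (a : ℤ) :
    dilate N (AddMonoidAlgebra.single c a) = AddMonoidAlgebra.single (2 • c) a :=
  AddMonoidAlgebra.mapDomain_single

lemma dilate_powerSum (k : ℕ) : dilate N (powerSum N k) = powerSum N (2 * k) := by
  simp_rw [powerSum, map_sum, laurentX_pow, dilate_single, ← Pi.single_smul']
  simp

lemma dilate_alternant (c : Fin N → ℤ) : dilate N (alternant c) = alternant (2 • c) := by
  simp_rw [alternant, map_sum, dilate_single]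
  rfl

lemma exists_of_coeff_dilate_mul_ne_zero {f g : LaurentAlg N} {d : Fin N → ℤ}
    (h : (dilate N f * g).coeff d ≠ 0) : ∃ c, f.coeff c ≠ 0 ∧ g.coeff (d - 2 • c) ≠ 0 := by
  obtain ⟨a, ha, b, hb, rfl⟩ := Finset.mem_add.1
    (AddMonoidAlgebra.support_coeff_mul_subset _ _ (Finsupp.mem_support_iff.2 h))
  obtain ⟨c, hc, rfl⟩ := Finset.mem_image.1 (Finsupp.mapDomain_support ha)
  refine ⟨c, Finsupp.mem_support_iff.1 hc, ?_⟩
  rw [nsmulAddMonoidHom_apply, add_sub_cancel_left]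
  exact Finsupp.mem_support_iff.1 hb

end Dilation

section EvenOrTop

variable {N : ℕ}

lemma sum_staircase_add_le {c : Fin N → ℤ} (hc : Function.Injective c) (h0 : ∀ i, 0 ≤ c i)
    {v : ℤ} (hv0 : 0 ≤ v) (hv : ∀ i, c i ≠ v) :
    ∑ i, staircase N i + N ≤ ∑ i, c i + v := by
  have hn : v ∉ Finset.univ.image c := by simpa using hv
  have h := Finset.sum_range_le_sum (s := insert v (Finset.univ.image c)) (c := 0)
    (by simpa using ⟨hv0, h0⟩)
  rw [Finset.card_insert_of_notMem hn, Finset.sum_insert hn, Finset.card_image_of_injective _ hc,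
    Finset.sum_image hc.injOn, Finset.card_univ, Fintype.card_fin, Finset.sum_range_succ,
    Finset.sum_range] at h
  simpa [staircase, add_comm v] using h

/-- Exponent vectors all of whose entries are even or equal to `2N - 1`. -/
def IsEvenOrTop (d : Fin N → ℤ) : Prop := ∀ i, Even (d i) ∨ d i = 2 * N - 1

lemma exists_of_coeff_powerSum_mul_alternant_staircase_ne_zero {k : ℕ} (hk : 0 < k)
    {c : Fin N → ℤ} (h : (powerSum N k * alternant (staircase N)).coeff c ≠ 0) :
    ∃ (σ : Equiv.Perm (Fin N)) (i : Fin N),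
      staircase N ∘ σ + Pi.single i (k : ℤ) = c ∧ N ≤ (σ i : ℕ) + k := by
  have hinj :=
    ((isAlternating_coeff_alternant (staircase N)).powerSum_mul k).injective_of_ne_zero h
  rw [coeff_powerSum_mul] at h
  obtain ⟨i, -, hi⟩ := Finset.exists_ne_zero_of_sum_ne_zero h
  obtain ⟨σ, hσ⟩ := exists_comp_eq_of_coeff_alternant_ne_zero hi
  have hc : staircase N ∘ σ + Pi.single i (k : ℤ) = c := by rw [hσ, sub_add_cancel]
  refine ⟨σ, i, hc, ?_⟩
  by_contra! hlt
  obtain ⟨j, hj⟩ := σ.surjective ⟨σ i + k, hlt⟩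
  have hji : j ≠ i := by
    rintro rfl
    exact hk.ne' (by simpa using (congrArg Fin.val hj).symm)
  refine hji (hinj ?_)
  simp [← hc, hji, staircase, hj]

lemma coeff_alternant_mul_powerAlternant_eq_zero {d : Fin N → ℤ} (hd : IsEvenOrTop d)
    {k : ℕ} (hk : 0 < k) {m : Multiset ℕ} (hm : 2 * k + m.sum ≤ N) :
    (alternant (2 • staircase N) * powerAlternant N (2 * k ::ₘ m)).coeff d = 0 := by
  rw [powerAlternant_cons, ← mul_assoc, mul_comm (alternant _), ← dilate_powerSum,
    ← dilate_alternant, ← map_mul]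
  by_contra h
  obtain ⟨c, hc, he⟩ := exists_of_coeff_dilate_mul_ne_zero h
  obtain ⟨σ, i, rfl, hσi⟩ := exists_of_coeff_powerSum_mul_alternant_staircase_ne_zero hk hc
  obtain ⟨h0, hsum⟩ := isSupportedOn_powerAlternant m _ he
  have hinj := (isAlternating_powerAlternant m).injective_of_ne_zero he
  set e := d - 2 • (staircase N ∘ σ + Pi.single i (k : ℤ)) with he_def
  have hei : e i = d i - 2 * (σ i : ℕ) - 2 * k := by simp [he_def, staircase]; ring
  have hej (j : Fin N) (hj : j ≠ i) : e j = d j - 2 * (σ j : ℕ) := by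
    simp [he_def, staircase, hj]
  have h0i := h0 i
  have hlt := (σ i).2
  have hdi : Even (d i) := (hd i).resolve_right fun htop => by omega
  have hle := sum_staircase_add_le hinj h0 (v := 2 * N - 1 - 2 * (σ i : ℕ)) (by omega) ?_
  · omega
  intro j hj
  rcases eq_or_ne j i with rfl | hji
  · obtain ⟨r, hr⟩ := hdi
    omega
  rw [hej j hji] at hj
  rcases hd j with ⟨r, hr⟩ | hdj
  · omega
  · exact hji (σ.injective (Fin.ext (by omega)))

end EvenOrTop

section Projective

variable {N n : ℕ}

/-- The virtual character `π ↦ [x^d] (a_{2δ} a_δ p_π)` of `Sₙ`. -/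
noncomputable def psiChar (n : ℕ) (d : Fin N → ℤ) (π : Equiv.Perm (Fin n)) : ℂ :=
  ((alternant (2 • staircase N) * powerAlternant N π.partition.parts).coeff d : ℤ)

lemma psiChar_eq_sum (d : Fin N → ℤ) :
    psiChar n d = ∑ σ : Equiv.Perm (Fin N), (Equiv.Perm.sign σ : ℤ) •
      vchar n (d - (2 • staircase N) ∘ σ) := by
  ext π
  simp [psiChar, coeff_alternant_mul, vchar]

lemma odd_multiset_lcm_iff {m : Multiset ℕ} : Odd m.lcm ↔ ∀ k ∈ m, Odd k := by
  refine ⟨fun h k hk => h.of_dvd_nat (Multiset.dvd_lcm hk), fun h => ?_⟩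
  induction m using Multiset.induction_on with
  | empty => simp
  | cons a m ih =>
    have hdvd : lcm a m.lcm ∣ a * m.lcm := lcm_dvd (dvd_mul_right _ _) (dvd_mul_left _ _)
    rw [Multiset.forall_mem_cons] at h
    rw [Multiset.lcm_cons]
    exact (h.1.mul (ih h.2)).of_dvd_nat hdvd

lemma odd_orderOf_iff (π : Equiv.Perm (Fin n)) :
    Odd (orderOf π) ↔ ∀ k ∈ π.partition.parts, Odd k := by
  have hone (a : ℕ) : ∀ k ∈ Multiset.replicate a 1, Odd k := fun k hk =>
    Multiset.eq_of_mem_replicate hk ▸ odd_one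
  rw [← Equiv.Perm.lcm_cycleType, odd_multiset_lcm_iff, Equiv.Perm.parts_partition]
  simp only [Multiset.mem_add, or_imp, forall_and]
  exact (and_iff_left (hone _)).symm

lemma psiChar_eq_zero {d : Fin N → ℤ} (hd : IsEvenOrTop d) (hnN : n ≤ N)
    {π : Equiv.Perm (Fin n)} (hπ : ¬ Odd (orderOf π)) : psiChar n d π = 0 := by
  rw [odd_orderOf_iff] at hπ
  push Not at hπ
  obtain ⟨q, hq, hodd⟩ := hπ
  obtain ⟨k, rfl⟩ := even_iff_exists_two_mul.1 (Nat.not_odd_iff_even.1 hodd)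
  obtain ⟨m, hm⟩ := Multiset.exists_cons_of_mem hq
  have hk : 0 < k := pos_of_mul_pos_right (π.partition.parts_pos hq) zero_le_two
  have hsum := π.partition.parts_sum
  rw [hm, Multiset.sum_cons, Fintype.card_fin] at hsum
  rw [psiChar, hm, coeff_alternant_mul_powerAlternant_eq_zero hd hk (hsum.trans_le hnN),
    Int.cast_zero]

lemma charInner_twoReg_psiChar {d : Fin N → ℤ} (hd : IsEvenOrTop d) (hnN : n ≤ N)
    (f : Equiv.Perm (Fin n) → ℂ) :
    charInner (twoReg f) (psiChar n d) = charInner f (psiChar n d) := by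
  rw [charInner_apply, charInner_apply]
  congr 1
  refine Finset.sum_congr rfl fun π _ => ?_
  by_cases h : Odd (orderOf π)
  · rw [twoReg, if_pos h]
  · rw [psiChar_eq_zero hd hnN (by rwa [orderOf_inv]), mul_zero, mul_zero]

lemma charInner_bchar_psiChar {A : Finset ℕ} (hA : A ∈ betaSets N n) (d : Fin N → ℤ) :
    charInner (bchar N n A) (psiChar n d) =
      ((alternant (2 • staircase N) * alternant (expVec N A)).coeff d : ℤ) := by
  rw [psiChar_eq_sum, map_sum, coeff_alternant_mul, Int.cast_sum]
  refine Finset.sum_congr rfl fun σ _ => ?_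
  rw [map_zsmul, bchar, charInner_vchar (expVec_nonneg A) (sum_expVec hA), zsmul_eq_mul,
    Int.cast_mul]

end Projective

/-! ## Folding -/

section AlternantProduct

variable {N : ℕ}

lemma card_filter_comp_perm_eq {ι α : Type*} [Fintype ι] [DecidableEq ι] [DecidableEq α]
    {c d : ι → α} (h : ∃ τ : Equiv.Perm ι, c ∘ τ = d) :
    (Finset.univ.filter fun τ : Equiv.Perm ι => c ∘ τ = d).card =
      (Finset.univ.filter fun τ : Equiv.Perm ι => d ∘ τ = d).card := by
  obtain ⟨τ₀, rfl⟩ := h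
  refine (Finset.card_equiv (Equiv.mulLeft τ₀) fun τ => ?_).symm
  simp [Function.comp_assoc]

/-- The signed number of permutations `ρ` such that `a + b ∘ ρ` is a rearrangement of `d`. -/
noncomputable def signedCount (a b d : Fin N → ℤ) : ℤ :=
  ∑ ρ ∈ Finset.univ.filter fun ρ : Equiv.Perm (Fin N) =>
    ∃ τ : Equiv.Perm (Fin N), (a + b ∘ ρ) ∘ τ = d, (Equiv.Perm.sign ρ : ℤ)

lemma coeff_alternant_mul_alternant (a b d : Fin N → ℤ) :
    (alternant a * alternant b).coeff d =
      (Finset.univ.filter fun τ : Equiv.Perm (Fin N) => d ∘ τ = d).card * signedCount a b d := by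
  have hinner (σ : Equiv.Perm (Fin N)) :
      (Equiv.Perm.sign σ : ℤ) * (alternant b).coeff (d - a ∘ σ) =
        ∑ ρ : Equiv.Perm (Fin N), if (a + b ∘ ρ) ∘ σ = d then (Equiv.Perm.sign ρ : ℤ) else 0 := by
    rw [coeff_alternant, Finset.mul_sum, ← Equiv.sum_comp (Equiv.mulRight σ)]
    refine Finset.sum_congr rfl fun ρ _ => ?_
    have hiff : b ∘ ⇑(ρ * σ) = d - a ∘ σ ↔ (a + b ∘ ρ) ∘ σ = d := by
      rw [eq_sub_iff_add_eq', Equiv.Perm.coe_mul]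
      rfl
    rw [Equiv.coe_mulRight, mul_ite, mul_zero, Equiv.Perm.sign_mul, mul_comm, Units.val_mul,
      mul_assoc, ← Units.val_mul, Int.units_mul_self, Units.val_one, mul_one]
    simp only [hiff]
  simp_rw [coeff_alternant_mul, hinner]
  rw [Finset.sum_comm, signedCount, Finset.mul_sum, Finset.sum_filter]
  refine Finset.sum_congr rfl fun ρ _ => ?_
  rw [← Finset.sum_filter, Finset.sum_const, nsmul_eq_mul]
  split_ifs with h
  · rw [card_filter_comp_perm_eq h]
  · rw [Finset.filter_false_of_mem fun τ _ hτ => h ⟨τ, hτ⟩, Finset.card_empty, Nat.cast_zero,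
      zero_mul]

end AlternantProduct

section Folding

variable {N : ℕ}

/-- Arrangements `g` for which `2δ + g` has only entries that are even or equal to `2N - 1`. Such a
`g` has its odd entries in prescribed positions. -/
def IsFolded (g : Fin N → ℤ) : Prop := IsEvenOrTop (2 • staircase N + g)

lemma two_smul_staircase_add_apply (g : Fin N → ℤ) (r : Fin N) :
    (2 • staircase N + g) r = 2 * (r : ℕ) + g r := by
  simp [staircase]

lemma isFolded_iff {g : Fin N → ℤ} :
    IsFolded g ↔ ∀ r, Odd (g r) → g r = 2 * N - 1 - 2 * (r : ℕ) := by
  refine forall_congr' fun r => ?_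
  rw [two_smul_staircase_add_apply, Int.even_add, iff_true_left (even_two_mul _),
    ← Int.not_odd_iff_even, ← imp_iff_not_or, @eq_sub_iff_add_eq' _ _ (g r)]

lemma IsEvenOrTop.comp_perm_iff {d : Fin N → ℤ} {τ : Equiv.Perm (Fin N)} :
    IsEvenOrTop (d ∘ τ) ↔ IsEvenOrTop d :=
  τ.forall_congr_left.trans (by simp [IsEvenOrTop])

lemma exists_isFolded_comp {b : Fin N → ℤ} (hb : Function.Injective b) (h0 : ∀ i, 0 ≤ b i)
    (hlt : ∀ i, b i < 2 * N) : ∃ ρ : Equiv.Perm (Fin N), IsFolded (b ∘ ρ) := by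
  have hf (i : Fin N) : ((2 * N - 1 - b i) / 2).toNat < N := by
    have := h0 i
    have := hlt i
    omega
  have hpos {i : Fin N} (hi : Odd (b i)) :
      b i = 2 * N - 1 - 2 * (((2 * N - 1 - b i) / 2).toNat : ℕ) := by
    obtain ⟨k, hk⟩ := hi
    have := hlt i
    omega
  obtain ⟨g, hg⟩ := Set.MapsTo.exists_equiv_extend_of_card_eq (t := Finset.univ)
    (s := {i | Odd (b i)}) (f := fun i => (⟨_, hf i⟩ : Fin N)) (by simp) (fun _ _ => by simp)
    fun i hi j hj hij => hb (by rw [hpos hi, hpos hj, Fin.mk.inj hij])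
  let σ : Equiv.Perm (Fin N) := g.trans (Equiv.subtypeUnivEquiv Finset.mem_univ)
  refine ⟨σ.symm, isFolded_iff.2 fun r hr => ?_⟩
  have hr' : (⟨_, hf (σ.symm r)⟩ : Fin N) = r :=
    (hg _ hr).symm.trans (σ.apply_symm_apply r)
  rw [← congrArg Fin.val hr']
  exact hpos hr

lemma IsFolded.odd_iff {g : Fin N → ℤ} (hg : IsFolded g) (r : Fin N) :
    Odd (g r) ↔ 2 * (N : ℤ) - 1 - 2 * (r : ℕ) ∈ Set.range g := by
  rw [isFolded_iff] at hg
  refine ⟨fun h => ⟨r, hg r h⟩, ?_⟩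
  rintro ⟨s, hs⟩
  have hodd : Odd (g s) := by rw [hs, Int.odd_iff]; omega
  obtain rfl : s = r := Fin.ext (by have := hg s hodd; omega)
  exact hodd

lemma IsFolded.eq_of_image_eq {g g' : Fin N → ℤ} (hg : IsFolded g) (hg' : IsFolded g')
    (hmono : StrictMonoOn g {r | Even (g r)}) (hmono' : StrictMonoOn g' {r | Even (g' r)})
    (hset : {r | Even (g r)} = {r | Even (g' r)})
    (himage : g '' {r | Even (g r)} = g' '' {r | Even (g' r)}) : g = g' := by
  have heven : {r | Even (g r)}.domRestrict g = {r | Even (g r)}.domRestrict g' := by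
    rw [← StrictMono.range_inj (strictMono_domRestrict.2 hmono)
      (strictMono_domRestrict.2 (hset ▸ hmono')), Set.range_domRestrict, Set.range_domRestrict,
      himage, hset]
  ext r
  rcases Int.even_or_odd (g r) with h | h
  · exact congrFun heven ⟨r, h⟩
  · have h' : Odd (g' r) := Int.not_even_iff_odd.1 fun h' =>
      Int.not_even_iff_odd.2 h (hset.symm.subset h')
    rw [isFolded_iff.1 hg r h, isFolded_iff.1 hg' r h']

lemma image_setOf_even (g : Fin N → ℤ) : g '' {r | Even (g r)} = Set.range g ∩ {x | Even x} :=
  Set.image_preimage_eq_range_inter (t := {x | Even x})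

lemma IsFolded.eq_of_range_eq {g g' : Fin N → ℤ} (hg : IsFolded g) (hg' : IsFolded g')
    (hmono : StrictMonoOn g {r | Even (g r)}) (hmono' : StrictMonoOn g' {r | Even (g' r)})
    (hrange : Set.range g = Set.range g') : g = g' := by
  refine hg.eq_of_image_eq hg' hmono hmono' ?_ (by rw [image_setOf_even, image_setOf_even, hrange])
  ext r
  simp only [Set.mem_ofPred_eq, ← Int.not_odd_iff_even, hg.odd_iff, hg'.odd_iff, hrange]

lemma IsFolded.comp_swap {g : Fin N → ℤ} (hg : IsFolded g) {i j : Fin N} (hi : Even (g i))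
    (hj : Even (g j)) : IsFolded (g ∘ Equiv.swap i j) := by
  rw [isFolded_iff] at hg ⊢
  intro r hr
  rw [Function.comp_apply, Equiv.swap_apply_def] at hr ⊢
  split_ifs at hr ⊢ with hri hrj
  · exact absurd hj (Int.not_even_iff_odd.2 hr)
  · exact absurd hi (Int.not_even_iff_odd.2 hr)
  · exact hg r hr

lemma sum_sq_add_comp_swap (a g : Fin N → ℤ) {i j : Fin N} (hij : i ≠ j) :
    ∑ r, ((a + g ∘ Equiv.swap i j) r) ^ 2 =
      ∑ r, ((a + g) r) ^ 2 + 2 * ((a j - a i) * (g i - g j)) := by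
  rw [← sub_eq_iff_eq_add', ← Finset.sum_sub_distrib,
    ← Finset.sum_subset (Finset.subset_univ {i, j}) fun r _ hr => ?_, Finset.sum_pair hij]
  · simp
    ring
  · simp only [Finset.mem_insert, Finset.mem_singleton, not_or] at hr
    simp [Equiv.swap_apply_of_ne_of_ne hr.1 hr.2]

/-- `ρ` is a folding of `b` if `b ∘ ρ` is the folded rearrangement of `b` whose sum with `2δ` is
longest. -/
def IsFolding (b : Fin N → ℤ) (ρ : Equiv.Perm (Fin N)) : Prop :=
  IsFolded (b ∘ ρ) ∧ ∀ ρ' : Equiv.Perm (Fin N), IsFolded (b ∘ ρ') →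
    ∑ r, ((2 • staircase N + b ∘ ρ') r) ^ 2 ≤ ∑ r, ((2 • staircase N + b ∘ ρ) r) ^ 2

lemma exists_isFolding {b : Fin N → ℤ} (hb : Function.Injective b) (h0 : ∀ i, 0 ≤ b i)
    (hlt : ∀ i, b i < 2 * N) : ∃ ρ, IsFolding b ρ := by
  obtain ⟨ρ, hρ, hmax⟩ := Finset.exists_max_image
    (Finset.univ.filter fun ρ : Equiv.Perm (Fin N) => IsFolded (b ∘ ρ))
    (fun ρ => ∑ r, ((2 • staircase N + b ∘ ρ) r) ^ 2)
    ((exists_isFolded_comp hb h0 hlt).imp fun ρ => (Finset.mem_filter_univ ρ).2)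
  exact ⟨ρ, (Finset.mem_filter_univ ρ).1 hρ, fun ρ' hρ' =>
    hmax ρ' ((Finset.mem_filter_univ ρ').2 hρ')⟩

lemma IsFolding.strictMonoOn {b : Fin N → ℤ} (hb : Function.Injective b)
    {ρ : Equiv.Perm (Fin N)} (h : IsFolding b ρ) : StrictMonoOn (b ∘ ρ) {r | Even ((b ∘ ρ) r)} := by
  intro i hi j hj hij
  by_contra! hle
  have hlt : (b ∘ ρ) j < (b ∘ ρ) i := hle.lt_of_ne fun he => hij.ne' (ρ.injective (hb he))
  have hsum := h.2 (ρ * Equiv.swap i j) (h.1.comp_swap hi hj)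
  rw [Equiv.Perm.coe_mul, ← Function.comp_assoc, sum_sq_add_comp_swap _ _ hij.ne] at hsum
  have hpos : 0 < ((2 • staircase N) j - (2 • staircase N) i) * ((b ∘ ρ) i - (b ∘ ρ) j) :=
    mul_pos (by simp [staircase, hij]) (sub_pos.2 hlt)
  omega

lemma IsFolding.unique {b : Fin N → ℤ} (hb : Function.Injective b) {ρ ρ' : Equiv.Perm (Fin N)}
    (h : IsFolding b ρ) (h' : IsFolding b ρ') : ρ = ρ' := by
  have := h.1.eq_of_range_eq h'.1 (h.strictMonoOn hb) (h'.strictMonoOn hb)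
    (by simp [EquivLike.range_comp])
  exact DFunLike.coe_injective (hb.comp_left this)

lemma IsFolding.eq_of_sum_sq_eq {b : Fin N → ℤ} (hb : Function.Injective b)
    {ρ ρ' : Equiv.Perm (Fin N)} (h : IsFolding b ρ) (hρ' : IsFolded (b ∘ ρ'))
    (hsum : ∑ r, ((2 • staircase N + b ∘ ρ') r) ^ 2 =
      ∑ r, ((2 • staircase N + b ∘ ρ) r) ^ 2) : ρ' = ρ :=
  IsFolding.unique hb ⟨hρ', fun _ hτ => (h.2 _ hτ).trans_eq hsum.symm⟩ h

lemma exists_of_signedCount_ne_zero {b d : Fin N → ℤ} (hd : IsEvenOrTop d)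
    (h : signedCount (2 • staircase N) b d ≠ 0) : ∃ ρ τ : Equiv.Perm (Fin N),
      IsFolded (b ∘ ρ) ∧ (2 • staircase N + b ∘ ρ) ∘ τ = d := by
  obtain ⟨ρ, hρ, -⟩ := Finset.exists_ne_zero_of_sum_ne_zero h
  obtain ⟨τ, rfl⟩ := (Finset.mem_filter_univ ρ).1 hρ
  exact ⟨ρ, τ, IsEvenOrTop.comp_perm_iff.1 hd, rfl⟩

lemma IsFolding.sum_sq_le_of_signedCount_ne_zero {b d : Fin N → ℤ} {ρ : Equiv.Perm (Fin N)}
    (h : IsFolding b ρ) (hd : IsEvenOrTop d) (hne : signedCount (2 • staircase N) b d ≠ 0) :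
    ∑ r, d r ^ 2 ≤ ∑ r, ((2 • staircase N + b ∘ ρ) r) ^ 2 := by
  obtain ⟨ρ', τ, hρ', rfl⟩ := exists_of_signedCount_ne_zero hd hne
  exact (Equiv.sum_comp τ fun r => ((2 • staircase N + b ∘ ρ') r) ^ 2).trans_le (h.2 ρ' hρ')

lemma IsFolding.exists_comp_eq_of_signedCount_ne_zero {b d : Fin N → ℤ}
    {ρ : Equiv.Perm (Fin N)} (hb : Function.Injective b) (h : IsFolding b ρ)
    (hd : IsEvenOrTop d) (hne : signedCount (2 • staircase N) b d ≠ 0)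
    (hsum : ∑ r, d r ^ 2 = ∑ r, ((2 • staircase N + b ∘ ρ) r) ^ 2) :
    ∃ τ : Equiv.Perm (Fin N), (2 • staircase N + b ∘ ρ) ∘ τ = d := by
  obtain ⟨ρ', τ, hρ', rfl⟩ := exists_of_signedCount_ne_zero hd hne
  obtain rfl : ρ' = ρ := h.eq_of_sum_sq_eq hb hρ' <|
    (Equiv.sum_comp τ fun r => ((2 • staircase N + b ∘ ρ') r) ^ 2).symm.trans hsum
  exact ⟨τ, rfl⟩

lemma IsFolding.signedCount_eq {b : Fin N → ℤ} {ρ : Equiv.Perm (Fin N)}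
    (hb : Function.Injective b) (h : IsFolding b ρ) :
    signedCount (2 • staircase N) b (2 • staircase N + b ∘ ρ) = Equiv.Perm.sign ρ := by
  have hfilter : (Finset.univ.filter fun ρ' : Equiv.Perm (Fin N) => ∃ τ : Equiv.Perm (Fin N),
      (2 • staircase N + b ∘ ⇑ρ') ∘ ⇑τ = 2 • staircase N + b ∘ ⇑ρ) = {ρ} := by
    ext ρ'
    rw [Finset.mem_filter_univ, Finset.mem_singleton]
    refine ⟨?_, fun he => ⟨1, by rw [he, Equiv.Perm.coe_one, Function.comp_id]⟩⟩
    rintro ⟨τ, hτ⟩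
    refine h.eq_of_sum_sq_eq hb (IsEvenOrTop.comp_perm_iff.1 (by rw [hτ]; exact h.1)) ?_
    rw [← hτ]
    exact (Equiv.sum_comp τ fun r => ((2 • staircase N + b ∘ ρ') r) ^ 2).symm
  rw [signedCount, hfilter, Finset.sum_singleton]

end Folding

section Labels

variable {N n : ℕ} {A A' : Finset ℕ}

lemma strictMonoOn_two_smul_staircase_add {g : Fin N → ℤ} {s : Set (Fin N)}
    (hg : StrictMonoOn g s) : StrictMonoOn (2 • staircase N + g) s := by
  intro i hi j hj hij
  have := hg hi hj hij
  have : (i : ℕ) < j := hij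
  rw [two_smul_staircase_add_apply, two_smul_staircase_add_apply]
  omega

lemma comp_orderEmbOfFin_eq {α : Type*} [Preorder α] {f f' : Fin N → α} {P P' : Finset (Fin N)}
    (hf : StrictMonoOn f P) (hf' : StrictMonoOn f' P') (h : f '' P = f' '' P') {k : ℕ}
    (hP : P.card = k) (hP' : P'.card = k) :
    f ∘ P.orderEmbOfFin hP = f' ∘ P'.orderEmbOfFin hP' := by
  rw [← StrictMono.range_inj, Set.range_comp, Set.range_comp, Finset.range_orderEmbOfFin,
    Finset.range_orderEmbOfFin, h]
  · exact fun i j hij => hf (P.orderEmbOfFin_mem hP i) (P.orderEmbOfFin_mem hP j) (by simpa)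
  · exact fun i j hij => hf' (P'.orderEmbOfFin_mem hP' i) (P'.orderEmbOfFin_mem hP' j) (by simpa)

lemma eq_of_image_two_smul_staircase_add_eq {g g' : Fin N → ℤ} {P P' : Finset (Fin N)}
    (hg : StrictMonoOn g P) (hg' : StrictMonoOn g' P') (h : g '' P = g' '' P')
    (hadd : (2 • staircase N + g) '' P = (2 • staircase N + g') '' P') : P = P' := by
  have hcard : P'.card = P.card := by
    rw [← Set.ncard_coe_finset, ← Set.ncard_coe_finset, ← hg'.injOn.ncard_image,
      ← hg.injOn.ncard_image, h]
  have hcomp := comp_orderEmbOfFin_eq hg hg' h rfl hcard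
  have hcomp_add := comp_orderEmbOfFin_eq (strictMonoOn_two_smul_staircase_add hg)
    (strictMonoOn_two_smul_staircase_add hg') hadd rfl hcard
  have hpos : ⇑(P.orderEmbOfFin rfl) = P'.orderEmbOfFin hcard := by
    ext i
    have h1 := congrFun hcomp i
    have h2 := congrFun hcomp_add i
    rw [Function.comp_apply, Function.comp_apply] at h1 h2
    rw [two_smul_staircase_add_apply, two_smul_staircase_add_apply] at h2
    omega
  rw [← Finset.coe_inj, ← P.range_orderEmbOfFin rfl, hpos, Finset.range_orderEmbOfFin]

/-- A folding of the exponent vector of `A` (`1` if there is none). -/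
noncomputable def foldPerm (N : ℕ) (A : Finset ℕ) : Equiv.Perm (Fin N) :=
  if h : ∃ ρ, IsFolding (expVec N A) ρ then h.choose else 1

/-- The folded exponent vector of `A`. -/
noncomputable def fold (N : ℕ) (A : Finset ℕ) : Fin N → ℤ := expVec N A ∘ foldPerm N A

/-- The exponent vector `2δ + fold N A`, whose coefficient detects `A` in the products
`a_{2δ} a_b`. -/
noncomputable def foldVec (N : ℕ) (A : Finset ℕ) : Fin N → ℤ := 2 • staircase N + fold N A

/-- The set of the even entries of `foldVec N A`. -/
noncomputable def foldLabel (N : ℕ) (A : Finset ℕ) : Finset ℤ :=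
  (Finset.univ.image (foldVec N A)).filter Even

/-- The halves of the even elements of `A`. -/
noncomputable def halfEvens (A : Finset ℕ) : Finset ℕ :=
  A.preimage (2 * ·) (mul_right_injective₀ two_ne_zero).injOn

lemma mem_halfEvens {x : ℕ} : x ∈ halfEvens A ↔ 2 * x ∈ A := Finset.mem_preimage

lemma isFolding_foldPerm (hnN : n ≤ N) (hA : A ∈ betaSets N n) :
    IsFolding (expVec N A) (foldPerm N A) := by
  have hcard := (mem_betaSets.1 hA).1
  have hmem (i : Fin N) : enum N A i ∈ A :=
    (image_enum hcard).subset (Finset.mem_image_of_mem _ (Finset.mem_univ i))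
  have h := exists_isFolding (expVec_injective hcard) (expVec_nonneg A) fun i => by
    have := lt_two_mul_of_mem_betaSets hnN hA (hmem i)
    rw [expVec]
    omega
  rw [foldPerm, dif_pos h]
  exact h.choose_spec

lemma isFolded_fold (hnN : n ≤ N) (hA : A ∈ betaSets N n) : IsFolded (fold N A) :=
  (isFolding_foldPerm hnN hA).1

lemma strictMonoOn_fold (hnN : n ≤ N) (hA : A ∈ betaSets N n) :
    StrictMonoOn (fold N A) {r | Even (fold N A r)} :=
  (isFolding_foldPerm hnN hA).strictMonoOn (expVec_injective (mem_betaSets.1 hA).1)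

lemma range_fold (hA : A ∈ betaSets N n) : Set.range (fold N A) = (Nat.cast : ℕ → ℤ) '' A := by
  rw [fold, EquivLike.range_comp, range_expVec (mem_betaSets.1 hA).1]

lemma image_fold_even (hA : A ∈ betaSets N n) :
    fold N A '' {r | Even (fold N A r)} = (fun x : ℕ => 2 * (x : ℤ)) '' halfEvens A := by
  rw [image_setOf_even, range_fold hA]
  ext z
  simp only [Set.mem_inter_iff, Set.mem_image, Finset.mem_coe, Set.mem_ofPred_eq, mem_halfEvens]
  constructor
  · rintro ⟨⟨x, hx, rfl⟩, heven⟩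
    obtain ⟨y, rfl⟩ := even_iff_exists_two_mul.1 ((Int.even_coe_nat x).1 heven)
    exact ⟨y, hx, by push_cast; rfl⟩
  · rintro ⟨y, hy, rfl⟩
    exact ⟨⟨2 * y, hy, by push_cast; rfl⟩, even_two_mul _⟩

lemma coe_foldLabel : (foldLabel N A : Set ℤ) = foldVec N A '' {r | Even (fold N A r)} := by
  have hiff (r : Fin N) : Even (foldVec N A r) ↔ Even (fold N A r) := by
    simp [foldVec, Int.even_add]
  simp only [← hiff, image_setOf_even]
  simp [foldLabel, Set.inter_def]

lemma card_foldLabel (hnN : n ≤ N) (hA : A ∈ betaSets N n) :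
    (foldLabel N A).card = (halfEvens A).card := by
  have hmono := strictMonoOn_fold hnN hA
  have htwo : Function.Injective fun x : ℕ => 2 * (x : ℤ) := fun x y h => by
    simpa using h
  rw [← Set.ncard_coe_finset, coe_foldLabel, foldVec,
    (strictMonoOn_two_smul_staircase_add hmono).injOn.ncard_image, ← hmono.injOn.ncard_image,
    image_fold_even hA, Set.ncard_image_of_injective _ htwo, Set.ncard_coe_finset]

lemma eq_of_foldLabel_eq (hnN : n ≤ N) (hA : A ∈ betaSets N n) (hA' : A' ∈ betaSets N n)
    (hhalf : halfEvens A = halfEvens A') (hlabel : foldLabel N A = foldLabel N A') : A = A' := by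
  have himage := image_fold_even hA
  rw [hhalf, ← image_fold_even hA'] at himage
  have hset := eq_of_image_two_smul_staircase_add_eq
    (P := Finset.univ.filter fun r => Even (fold N A r))
    (P' := Finset.univ.filter fun r => Even (fold N A' r))
    (by simpa using strictMonoOn_fold hnN hA) (by simpa using strictMonoOn_fold hnN hA')
    (by simpa using himage) (by
      rw [← Finset.coe_inj, coe_foldLabel, coe_foldLabel, foldVec, foldVec] at hlabel
      simpa only [Finset.coe_filter_univ] using hlabel)
  have hfold : fold N A = fold N A' := (isFolded_fold hnN hA).eq_of_image_eq
    (isFolded_fold hnN hA') (strictMonoOn_fold hnN hA) (strictMonoOn_fold hnN hA')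
    (by simpa using congrArg (fun P : Finset (Fin N) => (P : Set (Fin N))) hset) himage
  have hrange := range_fold hA
  rw [hfold, range_fold hA'] at hrange
  exact (Finset.coe_injective (Nat.cast_injective.image_injective hrange)).symm

/-- Invariance of a beta set under conjugation of partitions, which takes `A` to the complement of
its mirror image in `[0, 2N)`. -/
def IsFoldSymm (N : ℕ) (A : Finset ℕ) : Prop := ∀ p < 2 * N, p ∈ A ↔ 2 * N - 1 - p ∉ A

lemma IsFoldSymm.even_fold_iff (hs : IsFoldSymm N A) (hnN : n ≤ N) (hA : A ∈ betaSets N n)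
    (r : Fin N) : Even (fold N A r) ↔ (r : ℕ) ∈ halfEvens A := by
  have hr := r.2
  have hmirror : (2 * N - 1 - 2 * (r : ℕ) : ℤ) = ((2 * N - 1 - 2 * r : ℕ) : ℤ) := by omega
  rw [← Int.not_odd_iff_even, (isFolded_fold hnN hA).odd_iff, range_fold hA, hmirror,
    Nat.cast_injective.mem_set_image, Finset.mem_coe, mem_halfEvens, ← hs _ (by omega)]

lemma IsFoldSymm.image_even_fold (hs : IsFoldSymm N A) (hnN : n ≤ N) (hA : A ∈ betaSets N n) :
    Fin.val '' {r | Even (fold N A r)} = (halfEvens A : Set ℕ) := by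
  simp only [hs.even_fold_iff hnN hA]
  refine (Set.image_preimage_eq_iff (f := (Fin.val : Fin N → ℕ))).2 fun x hx => ?_
  have := lt_two_mul_of_mem_betaSets hnN hA (mem_halfEvens.1 hx)
  exact ⟨⟨x, by omega⟩, rfl⟩

lemma IsFoldSymm.fold_eq (hs : IsFoldSymm N A) (hnN : n ≤ N) (hA : A ∈ betaSets N n) {r : Fin N}
    (hr : Even (fold N A r)) : fold N A r = 2 * (r : ℕ) := by
  have htwo : StrictMonoOn (fun r : Fin N => 2 * ((r : ℕ) : ℤ)) {r | Even (fold N A r)} :=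
    fun i _ j _ hij => by simpa using hij
  have heq : {r | Even (fold N A r)}.domRestrict (fold N A) =
      {r | Even (fold N A r)}.domRestrict fun r => 2 * ((r : ℕ) : ℤ) := by
    rw [← StrictMono.range_inj (strictMono_domRestrict.2 (strictMonoOn_fold hnN hA))
      (strictMono_domRestrict.2 htwo), Set.range_domRestrict, Set.range_domRestrict,
      image_fold_even hA, ← hs.image_even_fold hnN hA, Set.image_image]
  exact congrFun heq ⟨r, hr⟩

lemma IsFoldSymm.foldLabel_eq (hs : IsFoldSymm N A) (hnN : n ≤ N) (hA : A ∈ betaSets N n) :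
    foldLabel N A = (halfEvens A).image fun x : ℕ => 4 * (x : ℤ) := by
  rw [← Finset.coe_inj, coe_foldLabel, Finset.coe_image, ← hs.image_even_fold hnN hA,
    Set.image_image]
  refine Set.image_congr fun r hr => ?_
  rw [foldVec, two_smul_staircase_add_apply, hs.fold_eq hnN hA hr]
  ring

lemma IsFoldSymm.eq_of_foldLabel_eq (hs : IsFoldSymm N A) (hs' : IsFoldSymm N A') (hnN : n ≤ N)
    (hA : A ∈ betaSets N n) (hA' : A' ∈ betaSets N n) (h : foldLabel N A = foldLabel N A') :
    A = A' := by
  have hfour : Function.Injective fun x : ℕ => 4 * (x : ℤ) := fun x y h => by simpa using h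
  refine _root_.eq_of_foldLabel_eq hnN hA hA' (Finset.image_injective hfour ?_) h
  rw [← hs.foldLabel_eq hnN hA, h, hs'.foldLabel_eq hnN hA']

/-- Sets whose even elements are `0, 2, …, 2(a - 1)` for some `a`. -/
def IsLowEven (A : Finset ℕ) : Prop := halfEvens A = Finset.range (halfEvens A).card

lemma IsLowEven.eq_of_foldLabel_eq (hl : IsLowEven A) (hl' : IsLowEven A') (hnN : n ≤ N)
    (hA : A ∈ betaSets N n) (hA' : A' ∈ betaSets N n) (h : foldLabel N A = foldLabel N A') :
    A = A' := by
  refine _root_.eq_of_foldLabel_eq hnN hA hA' ?_ h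
  rw [hl, hl', ← card_foldLabel hnN hA, h, card_foldLabel hnN hA']

end Labels

/-! ## Basic sets -/

lemma mem_of_forall_sum_smul_mem {ι M : Type*} [AddCommGroup M] {X : AddSubgroup M}
    {s : Finset ι} {c : ι → ι → ℤ} {m : ι → ℤ} (hunit : ∀ i ∈ s, IsUnit (c i i))
    (htri : ∀ i ∈ s, ∀ j ∈ s, i ≠ j → c i j ≠ 0 → m j < m i) {a : ι → M}
    (h : ∀ j ∈ s, ∑ i ∈ s, c i j • a i ∈ X) : ∀ i ∈ s, a i ∈ X := by
  by_contra! hbad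
  obtain ⟨j, hj, hmax⟩ := Finset.exists_max_image (s.filter fun i => a i ∉ X) m
    (hbad.imp fun i hi => Finset.mem_filter.2 hi)
  obtain ⟨hjs, hjX⟩ := Finset.mem_filter.1 hj
  have hrest : ∑ i ∈ s.erase j, c i j • a i ∈ X := by
    refine X.sum_mem fun i hi => ?_
    obtain ⟨hij, his⟩ := Finset.mem_erase.1 hi
    by_cases hc : c i j = 0
    · simp [hc]
    · refine X.zsmul_mem (by_contra fun hiX => ?_) _
      exact (htri i his j hjs hij hc).not_ge (hmax i (Finset.mem_filter.2 ⟨his, hiX⟩))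
  have hdiag := h j hjs
  rw [← Finset.add_sum_erase _ _ hjs, X.add_mem_cancel_right hrest] at hdiag
  obtain hone | hone := Int.isUnit_iff.1 (hunit j hjs) <;> simp [hone, hjX] at hdiag

section BasicSet

variable {N n : ℕ} {A A' : Finset ℕ}

/-- The value of `foldFunctional N n A'` on the restriction of `irrChar N n A`. -/
noncomputable def foldCoeff (N n : ℕ) (A A' : Finset ℕ) : ℤ :=
  bsign N n A * signedCount (2 • staircase N) (expVec N A) (foldVec N A')

/-- The inner product with `psiChar n (foldVec N A')`, normalised by the order of the stabiliser
of `foldVec N A'` so as to take integral values on restrictions of characters. -/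
noncomputable def foldFunctional (N n : ℕ) (A' : Finset ℕ) :
    (Equiv.Perm (Fin n) → ℂ) →ₗ[ℂ] ℂ :=
  ((Finset.univ.filter fun τ : Equiv.Perm (Fin N) =>
    foldVec N A' ∘ τ = foldVec N A').card : ℂ)⁻¹ • charInner.flip (psiChar n (foldVec N A'))

lemma isEvenOrTop_foldVec (hnN : n ≤ N) (hA : A ∈ betaSets N n) : IsEvenOrTop (foldVec N A) :=
  isFolded_fold hnN hA

lemma foldFunctional_twoReg_irrChar (hnN : n ≤ N) (hA : A ∈ betaSets N n)
    (hA' : A' ∈ betaSets N n) :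
    foldFunctional N n A' (twoReg (irrChar N n A)) = foldCoeff N n A A' := by
  have hstab : ((Finset.univ.filter fun τ : Equiv.Perm (Fin N) =>
      foldVec N A' ∘ τ = foldVec N A').card : ℂ) ≠ 0 :=
    Nat.cast_ne_zero.2 (Finset.card_ne_zero_of_mem ((Finset.mem_filter_univ 1).2 rfl))
  rw [foldFunctional, LinearMap.smul_apply, LinearMap.BilinForm.flip_apply,
    charInner_twoReg_psiChar (isEvenOrTop_foldVec hnN hA') hnN, irrChar, Units.smul_def, map_zsmul,
    LinearMap.smul_apply, charInner_bchar_psiChar hA, coeff_alternant_mul_alternant, foldCoeff,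
    smul_eq_mul, inv_mul_eq_iff_eq_mul₀ hstab, zsmul_eq_mul]
  push_cast
  ring

lemma isUnit_foldCoeff_self (hnN : n ≤ N) (hA : A ∈ betaSets N n) :
    IsUnit (foldCoeff N n A A) := by
  rw [foldCoeff, foldVec, fold, (isFolding_foldPerm hnN hA).signedCount_eq
    (expVec_injective (mem_betaSets.1 hA).1)]
  exact (bsign N n A).isUnit.mul (Units.isUnit _)

lemma foldLabel_eq_of_comp_eq {τ : Equiv.Perm (Fin N)} (h : foldVec N A ∘ τ = foldVec N A') :
    foldLabel N A = foldLabel N A' := by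
  have hrange : Finset.univ.image (foldVec N A) = Finset.univ.image (foldVec N A') := by
    rw [← Finset.coe_inj, Finset.coe_image, Finset.coe_image, Finset.coe_univ, Set.image_univ,
      Set.image_univ, ← h, EquivLike.range_comp]
  rw [foldLabel, hrange, foldLabel]

lemma sum_sq_foldVec_lt (hnN : n ≤ N) (hA : A ∈ betaSets N n) (hA' : A' ∈ betaSets N n)
    (hne : foldCoeff N n A A' ≠ 0) (hlabel : foldLabel N A ≠ foldLabel N A') :
    ∑ r, foldVec N A' r ^ 2 < ∑ r, foldVec N A r ^ 2 := by
  have hfold := isFolding_foldPerm hnN hA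
  have hcount := right_ne_zero_of_mul hne
  refine (hfold.sum_sq_le_of_signedCount_ne_zero (isEvenOrTop_foldVec hnN hA') hcount).lt_of_ne
    fun hsum => hlabel ?_
  obtain ⟨τ, hτ⟩ := hfold.exists_comp_eq_of_signedCount_ne_zero
    (expVec_injective (mem_betaSets.1 hA).1) (isEvenOrTop_foldVec hnN hA') hcount hsum
  exact foldLabel_eq_of_comp_eq hτ

lemma IsIrrChar.twoReg_mem_classFun {f : Equiv.Perm (Fin n) → ℂ} (hf : IsIrrChar _ f) :
    twoReg f ∈ classFun (Nat.Partition.odds n) := by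
  have hodd (π : Equiv.Perm (Fin n)) :
      Odd (orderOf π) ↔ cycleParts π ∈ Nat.Partition.odds n := by
    simp [odd_orderOf_iff, Nat.Partition.odds, Nat.Partition.restricted, cycleParts]
  refine mem_classFun (fun π π' h => ?_) fun π h => if_neg (mt (hodd π).1 h)
  simp only [twoReg, hodd, h, hf.eq_of_cycleParts_eq π π' h]

variable {B : Finset (Finset ℕ)}

lemma mem_of_forall_foldFunctional_mem (hnN : n ≤ N) (hB : B ⊆ betaSets N n)
    (hinj : Set.InjOn (foldLabel N) B) {X : AddSubgroup ℂ} {a : Finset ℕ → ℂ}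
    (h : ∀ A' ∈ B, foldFunctional N n A' (∑ A ∈ B, a A • twoReg (irrChar N n A)) ∈ X) :
    ∀ A ∈ B, a A ∈ X := by
  refine mem_of_forall_sum_smul_mem (c := foldCoeff N n) (m := fun A => ∑ r, foldVec N A r ^ 2)
    (fun A hA => isUnit_foldCoeff_self hnN (hB hA))
    (fun A hA A' hA' hne hc => sum_sq_foldVec_lt hnN (hB hA) (hB hA') hc (hinj.ne hA hA' hne))
    fun A' hA' => ?_
  convert h A' hA' using 1
  rw [map_sum]
  refine Finset.sum_congr rfl fun A hA => ?_
  rw [map_smul, foldFunctional_twoReg_irrChar hnN (hB hA) (hB hA'), zsmul_eq_mul, smul_eq_mul,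
    mul_comm]

lemma linearIndepOn_twoReg_irrChar (hnN : n ≤ N) (hB : B ⊆ betaSets N n)
    (hinj : Set.InjOn (foldLabel N) B) :
    LinearIndepOn ℂ (fun A => twoReg (irrChar N n A)) (B : Set (Finset ℕ)) := by
  refine linearIndepOn_finset_iff.2 fun a ha A hA => AddSubgroup.mem_bot.1 ?_
  refine mem_of_forall_foldFunctional_mem hnN hB hinj (fun A' _ => ?_) A hA
  rw [ha, map_zero]
  exact zero_mem _

lemma span_twoReg_irrChar_le (hB : B ⊆ betaSets N n) :
    Submodule.span ℂ ((fun A => twoReg (irrChar N n A)) '' B) ≤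
      classFun (Nat.Partition.odds n) := by
  rw [Submodule.span_le]
  rintro _ ⟨A, hA, rfl⟩
  exact (isIrrChar_irrChar (hB hA)).twoReg_mem_classFun

lemma finrank_span_twoReg_irrChar (hnN : n ≤ N) (hB : B ⊆ betaSets N n)
    (hinj : Set.InjOn (foldLabel N) B) :
    Module.finrank ℂ (Submodule.span ℂ ((fun A => twoReg (irrChar N n A)) '' B)) = B.card := by
  rw [Set.image_eq_range, finrank_span_eq_card (linearIndepOn_twoReg_irrChar hnN hB hinj)]
  exact Fintype.card_coe B

lemma card_le_card_odds (hnN : n ≤ N) (hB : B ⊆ betaSets N n)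
    (hinj : Set.InjOn (foldLabel N) B) : B.card ≤ (Nat.Partition.odds n).card := by
  rw [← finrank_span_twoReg_irrChar hnN hB hinj]
  exact (Submodule.finrank_mono (span_twoReg_irrChar_le hB)).trans (finrank_classFun_le _)

lemma span_twoReg_irrChar_eq (hnN : n ≤ N) (hB : B ⊆ betaSets N n)
    (hinj : Set.InjOn (foldLabel N) B) (hcard : (Nat.Partition.odds n).card ≤ B.card) :
    Submodule.span ℂ ((fun A => twoReg (irrChar N n A)) '' B) =
      classFun (Nat.Partition.odds n) := by
  refine Submodule.eq_of_le_of_finrank_le (span_twoReg_irrChar_le hB) ?_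
  rw [finrank_span_twoReg_irrChar hnN hB hinj]
  exact (finrank_classFun_le _).trans hcard

lemma twoReg_mem_span_int (hnN : n ≤ N) (hB : B ⊆ betaSets N n)
    (hinj : Set.InjOn (foldLabel N) B) (hcard : (Nat.Partition.odds n).card ≤ B.card)
    {f : Equiv.Perm (Fin n) → ℂ} (hf : IsIrrChar _ f) :
    twoReg f ∈ Submodule.span ℤ ((fun A => twoReg (irrChar N n A)) '' B) := by
  have hspan := hf.twoReg_mem_classFun
  rw [← span_twoReg_irrChar_eq hnN hB hinj hcard,
    Submodule.mem_span_image_finset_iff_exists_fun'] at hspan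
  obtain ⟨a, ha⟩ := hspan
  obtain ⟨A₀, hA₀, rfl⟩ := exists_irrChar_eq hnN hf
  have hint : ∀ A ∈ B, a A ∈ (Int.castAddHom ℂ).range :=
    mem_of_forall_foldFunctional_mem hnN hB hinj fun A' hA' => by
      rw [ha, foldFunctional_twoReg_irrChar hnN hA₀ (hB hA')]
      exact ⟨_, rfl⟩
  rw [← ha]
  refine Submodule.sum_mem _ fun A hA => ?_
  obtain ⟨z, hz⟩ := hint A hA
  rw [← hz, Int.coe_castAddHom, Int.cast_smul_eq_zsmul]
  exact Submodule.smul_mem _ _ (Submodule.subset_span ⟨A, hA, rfl⟩)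

lemma isTwoBasicSet_image_irrChar (hnN : n ≤ N) (hB : B ⊆ betaSets N n)
    (hinj : Set.InjOn (foldLabel N) B) (hcard : (Nat.Partition.odds n).card ≤ B.card) :
    IsTwoBasicSet (Equiv.Perm (Fin n)) (irrChar N n '' B) := by
  have hirr : irrChar N n '' B ⊆ {f | IsIrrChar _ f} := by
    rintro _ ⟨A, hA, rfl⟩
    exact isIrrChar_irrChar (hB hA)
  refine ⟨hirr, ?_, (Submodule.span_mono (Set.image_mono hirr)).antisymm ?_⟩
  · exact LinearIndepOn.image_of_comp _ _ <|
      (linearIndepOn_twoReg_irrChar hnN hB hinj).restrict_scalars fun a b hab => by simpa using hab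
  · rw [Submodule.span_le, Set.image_image]
    rintro _ ⟨f, hf, rfl⟩
    exact twoReg_mem_span_int hnN hB hinj hcard hf

end BasicSet

/-! ## Counting the labels -/

section Partitions

variable {m k n : ℕ}

/-- The partition whose odd parts are those of `μ` (when these are all odd) and whose even parts
are the doubles of those of `κ`. -/
def addDoubled (h : m + 2 * k = n) (μ : m.Partition) (κ : k.Partition) : n.Partition where
  parts := μ.parts + κ.parts.map (2 * ·)
  parts_pos {i} hi := by
    obtain hi | hi := Multiset.mem_add.1 hi
    · exact μ.parts_pos hi
    · obtain ⟨j, hj, rfl⟩ := Multiset.mem_map.1 hi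
      exact Nat.mul_pos two_pos (κ.parts_pos hj)
  parts_sum := by
    rw [Multiset.sum_add, Multiset.sum_map_mul_left, Multiset.map_id', μ.parts_sum, κ.parts_sum, h]

lemma filter_parts_addDoubled {p : ℕ → Prop} [DecidablePred p] (h : m + 2 * k = n) (μ : m.Partition)
    (κ : k.Partition) :
    (addDoubled h μ κ).parts.filter p = μ.parts.filter p + (κ.parts.map (2 * ·)).filter p :=
  Multiset.filter_add ..

lemma filter_even_parts_addDoubled (h : m + 2 * k = n) {μ : m.Partition}
    (hμ : μ ∈ Nat.Partition.odds m) (κ : k.Partition) :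
    (addDoubled h μ κ).parts.filter Even = κ.parts.map (2 * ·) := by
  rw [filter_parts_addDoubled, Multiset.filter_eq_nil.2 (Finset.mem_filter.1 hμ).2,
    Multiset.filter_eq_self.2 (by simp), zero_add]

lemma filter_not_even_parts_addDoubled (h : m + 2 * k = n) {μ : m.Partition}
    (hμ : μ ∈ Nat.Partition.odds m) (κ : k.Partition) :
    (addDoubled h μ κ).parts.filter (¬ Even ·) = μ.parts := by
  rw [filter_parts_addDoubled, Multiset.filter_eq_self.2 (Finset.mem_filter.1 hμ).2,
    Multiset.filter_eq_nil.2 (by simp), add_zero]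

lemma card_odds_mul_le (h : m + 2 * k = n) :
    (Nat.Partition.odds m).card * Fintype.card k.Partition ≤
      (Finset.univ.filter fun p : n.Partition => (p.parts.filter Even).sum / 2 = k).card := by
  rw [← Finset.card_univ, ← Finset.card_product]
  refine Finset.card_le_card_of_injOn (fun x => addDoubled h x.1 x.2) (fun x hx => ?_)
    fun x hx y hy hxy => ?_
  · have hx := (Finset.mem_product.1 hx).1
    rw [Finset.mem_coe, Finset.mem_filter_univ, filter_even_parts_addDoubled h hx,
      Multiset.sum_map_mul_left, Multiset.map_id', x.2.parts_sum, Nat.mul_div_cancel_left k two_pos]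
  · have hx := (Finset.mem_product.1 hx).1
    have hy := (Finset.mem_product.1 hy).1
    have hparts := congrArg (fun p : n.Partition => p.parts) hxy
    refine Prod.ext (Nat.Partition.ext ?_) (Nat.Partition.ext ?_)
    · simpa only [filter_not_even_parts_addDoubled h hx, filter_not_even_parts_addDoubled h hy]
        using congrArg (Multiset.filter (¬ Even ·)) hparts
    · refine Multiset.map_injective (mul_right_injective₀ two_ne_zero) ?_
      simpa only [filter_even_parts_addDoubled h hx, filter_even_parts_addDoubled h hy]
        using congrArg (Multiset.filter Even) hparts

lemma sum_card_odds_mul_le (n : ℕ) :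
    ∑ k ∈ Finset.range (n / 2 + 1),
      (Nat.Partition.odds (n - 2 * k)).card * Fintype.card k.Partition ≤
        Fintype.card n.Partition := by
  rw [← Finset.card_univ, Finset.card_eq_sum_card_fiberwise
    (f := fun p : n.Partition => (p.parts.filter Even).sum / 2) (t := Finset.range (n / 2 + 1))]
  · refine Finset.sum_le_sum fun k hk => card_odds_mul_le ?_
    have := Finset.mem_range.1 hk
    omega
  · intro p _
    refine Finset.mem_coe.2 (Finset.mem_range_succ_iff.2 (Nat.div_le_div_right ?_))
    have hsum := congrArg Multiset.sum (Multiset.filter_add_not Even p.parts)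
    rw [Multiset.sum_add, p.parts_sum] at hsum
    exact Nat.le.intro hsum

end Partitions

section LowEven

variable {N n : ℕ} {A A' : Finset ℕ}

lemma image_halfEvens (A : Finset ℕ) : (halfEvens A).image (2 * ·) = A.filter Even := by
  rw [halfEvens, Finset.image_preimage]
  exact Finset.filter_congr fun x _ => by simp [even_iff_exists_two_mul]

lemma eq_of_halfEvens_eq (heven : halfEvens A = halfEvens A')
    (hodd : A.filter (¬ Even ·) = A'.filter (¬ Even ·)) : A = A' := by
  rw [← Finset.filter_union_filter_not_eq Even A, hodd, ← image_halfEvens, heven,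
    image_halfEvens, Finset.filter_union_filter_not_eq]

lemma sum_halfEvens_add_sum_filter_not (A : Finset ℕ) (f : ℕ → ℕ) :
    ∑ x ∈ halfEvens A, f (2 * x) + ∑ x ∈ A.filter (¬ Even ·), f x = ∑ x ∈ A, f x := by
  rw [← Finset.sum_filter_add_sum_filter_not A Even, ← image_halfEvens,
    Finset.sum_image (mul_right_injective₀ two_ne_zero).injOn]

/-- The set obtained from `A` by replacing its even elements by `0, 2, …, 2(a - 1)`. -/
noncomputable def lowerEvens (A : Finset ℕ) : Finset ℕ :=
  A.filter (¬ Even ·) ∪ (Finset.range (halfEvens A).card).image (2 * ·)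

lemma halfEvens_lowerEvens (A : Finset ℕ) :
    halfEvens (lowerEvens A) = Finset.range (halfEvens A).card := by
  ext x
  simp [mem_halfEvens, lowerEvens]

lemma filter_not_even_lowerEvens (A : Finset ℕ) :
    (lowerEvens A).filter (¬ Even ·) = A.filter (¬ Even ·) := by
  rw [lowerEvens, Finset.filter_union, Finset.filter_filter,
    Finset.filter_eq_empty_iff (s := Finset.image ..) |>.2 (by simp), Finset.union_empty]
  simp only [and_self]

lemma isLowEven_lowerEvens (A : Finset ℕ) : IsLowEven (lowerEvens A) := by
  rw [IsLowEven, halfEvens_lowerEvens, Finset.card_range]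

lemma card_lowerEvens (A : Finset ℕ) : (lowerEvens A).card = A.card := by
  rw [Finset.card_eq_sum_ones, Finset.card_eq_sum_ones,
    ← sum_halfEvens_add_sum_filter_not (lowerEvens A), ← sum_halfEvens_add_sum_filter_not A,
    halfEvens_lowerEvens, filter_not_even_lowerEvens]
  simp

/-- Half of the amount by which `lowerEvens` decreases the sum of `A`. -/
noncomputable def evenExcess (A : Finset ℕ) : ℕ :=
  ∑ x ∈ halfEvens A, x - ∑ i : Fin (halfEvens A).card, (i : ℕ)

lemma sum_fin_card_le_sum (A : Finset ℕ) : ∑ i : Fin A.card, (i : ℕ) ≤ ∑ x ∈ A, x := by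
  have h := Finset.sum_range_le_sum (s := A.map Nat.castEmbedding) (c := 0) (by simp)
  zify
  simpa [Finset.sum_range] using h

lemma halfEvens_mem_betaSets (A : Finset ℕ) :
    halfEvens A ∈ betaSets (halfEvens A).card (evenExcess A) :=
  mem_betaSets.2 ⟨rfl, (Nat.add_sub_of_le (sum_fin_card_le_sum _)).symm⟩

lemma sum_lowerEvens_add (A : Finset ℕ) :
    ∑ x ∈ lowerEvens A, x + 2 * evenExcess A = ∑ x ∈ A, x := by
  have hexcess := (mem_betaSets.1 (halfEvens_mem_betaSets A)).2
  rw [← sum_halfEvens_add_sum_filter_not (lowerEvens A), ← sum_halfEvens_add_sum_filter_not A,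
    halfEvens_lowerEvens, filter_not_even_lowerEvens, ← Finset.mul_sum, ← Finset.mul_sum, hexcess,
    Finset.sum_range]
  ring

lemma two_mul_evenExcess_le (hA : A ∈ betaSets N n) : 2 * evenExcess A ≤ n := by
  obtain ⟨rfl, hsum⟩ := mem_betaSets.1 hA
  have hlower := sum_fin_card_le_sum (lowerEvens A)
  rw [card_lowerEvens] at hlower
  have := sum_lowerEvens_add A
  omega

lemma lowerEvens_mem_betaSets (hA : A ∈ betaSets N n) :
    lowerEvens A ∈ betaSets N (n - 2 * evenExcess A) := by
  obtain ⟨hcard, hsum⟩ := mem_betaSets.1 hA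
  have := sum_lowerEvens_add A
  have := two_mul_evenExcess_le hA
  exact mem_betaSets.2 ⟨(card_lowerEvens A).trans hcard, by omega⟩

lemma card_betaSets_le (N n : ℕ) : (betaSets N n).card ≤ Fintype.card n.Partition := by
  rw [← Finset.card_image_of_injOn (irrChar_injOn (N := N) (n := n))]
  refine card_le_card_partition fun f hf => ?_
  obtain ⟨A, hA, rfl⟩ := Finset.mem_image.1 hf
  exact isIrrChar_irrChar hA

lemma card_filter_evenExcess_le (N n k : ℕ) :
    ((betaSets N n).filter (evenExcess · = k)).card ≤
      Fintype.card k.Partition * ((betaSets N (n - 2 * k)).filter IsLowEven).card := by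
  refine Finset.card_le_mul_card_image_of_maps_to (f := lowerEvens) (fun A hA => ?_) _
    fun L _ => ?_
  · obtain ⟨hmem, rfl⟩ := Finset.mem_filter.1 hA
    exact Finset.mem_filter.2 ⟨lowerEvens_mem_betaSets hmem, isLowEven_lowerEvens A⟩
  · refine le_trans (Finset.card_le_card_of_injOn halfEvens (fun A hA => ?_)
      fun A hA A' hA' h => ?_) (card_betaSets_le (halfEvens L).card k)
    · obtain ⟨hA, hAL⟩ := Finset.mem_filter.1 hA
      obtain ⟨-, rfl⟩ := Finset.mem_filter.1 hA
      rw [← hAL, halfEvens_lowerEvens, Finset.card_range]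
      exact halfEvens_mem_betaSets A
    · refine eq_of_halfEvens_eq h ?_
      rw [← filter_not_even_lowerEvens A, (Finset.mem_filter.1 hA).2,
        ← filter_not_even_lowerEvens A', (Finset.mem_filter.1 hA').2]

lemma card_betaSets_le_sum (N n : ℕ) :
    (betaSets N n).card ≤ ∑ k ∈ Finset.range (n / 2 + 1),
      Fintype.card k.Partition * ((betaSets N (n - 2 * k)).filter IsLowEven).card := by
  rw [Finset.card_eq_sum_card_fiberwise (f := evenExcess) (t := Finset.range (n / 2 + 1))]
  · exact Finset.sum_le_sum fun k _ => card_filter_evenExcess_le N n k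
  · intro A hA
    have := two_mul_evenExcess_le hA
    rw [Finset.mem_coe, Finset.mem_range]
    omega

lemma injOn_foldLabel_isLowEven (hnN : n ≤ N) :
    Set.InjOn (foldLabel N) ((betaSets N n).filter IsLowEven) := fun A hA A' hA' => by
  obtain ⟨hA, hlow⟩ := Finset.mem_filter.1 hA
  obtain ⟨hA', hlow'⟩ := Finset.mem_filter.1 hA'
  exact hlow.eq_of_foldLabel_eq hlow' hnN hA hA'

lemma injOn_foldLabel_isFoldSymm (hnN : n ≤ N) :
    Set.InjOn (foldLabel N) ((betaSets N n).filter (IsFoldSymm N)) := fun A hA A' hA' => by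
  obtain ⟨hA, hsymm⟩ := Finset.mem_filter.1 hA
  obtain ⟨hA', hsymm'⟩ := Finset.mem_filter.1 hA'
  exact hsymm.eq_of_foldLabel_eq hsymm' hnN hA hA'

lemma card_odds_le_card_isLowEven (hnN : n ≤ N) :
    (Nat.Partition.odds n).card ≤ ((betaSets N n).filter IsLowEven).card := by
  have hle (k : ℕ) : ((betaSets N (n - 2 * k)).filter IsLowEven).card ≤
      (Nat.Partition.odds (n - 2 * k)).card :=
    have hk := (Nat.sub_le n (2 * k)).trans hnN
    card_le_card_odds hk (Finset.filter_subset _ _) (injOn_foldLabel_isLowEven hk)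
  by_contra! hlt
  have hsum : ∑ k ∈ Finset.range (n / 2 + 1),
      Fintype.card k.Partition * ((betaSets N (n - 2 * k)).filter IsLowEven).card <
        ∑ k ∈ Finset.range (n / 2 + 1),
          (Nat.Partition.odds (n - 2 * k)).card * Fintype.card k.Partition := by
    simp only [mul_comm (Fintype.card _)]
    exact Finset.sum_lt_sum (fun k _ => Nat.mul_le_mul_right _ (hle k))
      ⟨0, by simp, Nat.mul_lt_mul_of_pos_right hlt Fintype.card_pos⟩
  have hpart := card_partition_le_card_betaSets hnN
  exact ((hpart.trans (card_betaSets_le_sum N n)).trans_lt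
    (hsum.trans_le (sum_card_odds_mul_le n))).false

lemma exists_injOn_foldLabel (hnN : n ≤ N) : ∃ B ⊆ betaSets N n,
    (betaSets N n).filter (IsFoldSymm N) ⊆ B ∧ Set.InjOn (foldLabel N) B ∧
      (Nat.Partition.odds n).card ≤ B.card := by
  obtain ⟨B, hsymm, hB, himage, hinj⟩ :=
    (injOn_foldLabel_isFoldSymm hnN).exists_subset_injOn_subset_range_eq
      (Finset.coe_subset.2 (Finset.filter_subset (IsFoldSymm N) (betaSets N n)))
  lift B to Finset (Finset ℕ) using (betaSets N n).finite_toSet.subset hB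
  refine ⟨B, Finset.coe_subset.1 hB, Finset.coe_subset.1 hsymm, hinj, ?_⟩
  rw [← Finset.coe_image, ← Finset.coe_image, Finset.coe_inj] at himage
  calc (Nat.Partition.odds n).card
      ≤ ((betaSets N n).filter IsLowEven).card := card_odds_le_card_isLowEven hnN
    _ = (((betaSets N n).filter IsLowEven).image (foldLabel N)).card :=
      (Finset.card_image_of_injOn (injOn_foldLabel_isLowEven hnN)).symm
    _ ≤ ((betaSets N n).image (foldLabel N)).card :=
      Finset.card_le_card (Finset.image_subset_image (Finset.filter_subset _ _))
    _ = B.card := by rw [← himage, Finset.card_image_of_injOn hinj]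

end LowEven

/-- For every positive integer n, the symmetric group S_n possesses a 2-basic set
containing every irreducible character χ with ε ⊗ χ = χ, where ε is the sign character. -/
theorem Sn_has_twoBasicSet_containing_selfAssociated (n : ℕ) (hn : 0 < n) :
    ∃ B : Set (Equiv.Perm (Fin n) → ℂ),
      IsTwoBasicSet (Equiv.Perm (Fin n)) B ∧
      ∀ f : Equiv.Perm (Fin n) → ℂ, IsIrrChar (Equiv.Perm (Fin n)) f →
        (fun g => ((Equiv.Perm.sign g : ℤ) : ℂ) * f g) = f → f ∈ B := by
  obtain ⟨B, hB, hsymm, hinj, hcard⟩ := exists_injOn_foldLabel (le_refl n)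
  refine ⟨irrChar n n '' B, isTwoBasicSet_image_irrChar le_rfl hB hinj hcard, fun f hf hsign => ?_⟩
  obtain ⟨A, hA, rfl⟩ := exists_irrChar_eq le_rfl hf
  have hA_symm : IsFoldSymm n A := fun p => mem_iff_notMem_of_sign_mul_eq le_rfl hA hsign
  exact ⟨A, hsymm (Finset.mem_filter.2 ⟨hA, hA_symm⟩), rfl⟩
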